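/- arXiv:2207.02459 — 5 statements merged into one kernel-verified Lean document; each statement's English description precedes it below -/
import Mathlib

section
/- For every a ∈ k^×, there exists a unique k-algebra homomorphism ev_a : Ĥ_d^ext → H_d such that ev_a(T_i) = T_i for all 1 ≤ i ≤ d−1 and ev_a(ρ) = a·T_1^{-1} T_2^{-1} ⋯ T_{d−1}^{-1}, and there exists a unique k-algebra homomorphism ev'_a : Ĥ_d^ext → H_d such that ev'_a(T_i) = T_i for all 1 ≤ i ≤ d−1 and ev'_a(ρ) = a·T_1 T_2 ⋯ T_{d−1}. -/
/-!
The point is that the Coxeter element `P = T_1 ⋯ T_{d-1}` of the finite Hecke algebra already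
behaves like `ρ`. The braid relations give `P T_i = T_{i+1} P` for `1 ≤ i ≤ d - 2`
(`IsBraid.ascProd_mul`), hence `P² = (T_2 ⋯ T_{d-1}) P T_{d-1}` and therefore
`T_1 P² = P² T_{d-1}` (`IsBraid.ascProd_sq`). The inverses `T_i⁻¹` satisfy the braid relations too,
so the same holds for `T_1⁻¹ ⋯ T_{d-1}⁻¹`, and multiplying by the central scalar `a` changes nothing.

If a unit `R` has these two properties, put `T_0 := R T_{d-1} R⁻¹`. Conjugation by `R` then permutes
`T_0, …, T_{d-1}` cyclically (`tEv_conj`), so each affine relation follows by rotation from one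
among `T_1, …, T_{d-1}`, where it is a relation of `H_d`; this gives existence. Uniqueness holds
since the images of `ρ` and `T_1` determine those of `ρ⁻¹` and of every `T_i = ρ^{i-1} T_1 ρ^{1-i}`.
-/

/-! Hecke algebras of finite and (extended) affine type A, and evaluation maps. -/

noncomputable section

open scoped Classical

namespace PaperEval

/-- The ground field `k = ℂ(q)`. -/
abbrev kk : Type := RatFunc ℂ

/-- The parameter `q ∈ k`. -/
def qq : kk := RatFunc.X

/-- Generators of the extended affine Hecke algebra:
`T i` for `i : ZMod d`, together with `ρ` and `ρ⁻¹`. -/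
inductive ExtGen (d : ℕ) : Type
  | T : ZMod d → ExtGen d
  | rho : ExtGen d
  | rhoInv : ExtGen d

/-- The free `k`-algebra on the generators of `Ĥ_d^ext`. -/
abbrev FE (d : ℕ) : Type := FreeAlgebra kk (ExtGen d)

def fT (d : ℕ) (i : ZMod d) : FE d := FreeAlgebra.ι kk (ExtGen.T i)
def fR (d : ℕ) : FE d := FreeAlgebra.ι kk ExtGen.rho
def fRi (d : ℕ) : FE d := FreeAlgebra.ι kk ExtGen.rhoInv

/-- The defining relations of the extended affine Hecke algebra `Ĥ_d^ext`. -/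
inductive ExtRel (d : ℕ) : FE d → FE d → Prop
  | quad (i : ZMod d) :
      ExtRel d ((fT d i + algebraMap kk (FE d) qq) * (fT d i - algebraMap kk (FE d) qq⁻¹)) 0
  | comm (i j : ZMod d) : i ≠ j + 1 → j ≠ i + 1 →
      ExtRel d (fT d i * fT d j) (fT d j * fT d i)
  | braid (i : ZMod d) :
      ExtRel d (fT d i * fT d (i + 1) * fT d i) (fT d (i + 1) * fT d i * fT d (i + 1))
  | rhoMulInv : ExtRel d (fR d * fRi d) 1
  | rhoInvMul : ExtRel d (fRi d * fR d) 1
  | rhoConj (i : ZMod d) : ExtRel d (fR d * fT d i * fRi d) (fT d (i + 1))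

/-- The extended affine Hecke algebra `Ĥ_d^ext`. -/
abbrev ExtHecke (d : ℕ) : Type := RingQuot (ExtRel d)

/-- The generator `T_i` of `Ĥ_d^ext`. -/
def eT (d : ℕ) (i : ZMod d) : ExtHecke d := RingQuot.mkAlgHom kk (ExtRel d) (fT d i)

/-- The generator `ρ` of `Ĥ_d^ext`. -/
def eR (d : ℕ) : ExtHecke d := RingQuot.mkAlgHom kk (ExtRel d) (fR d)

/-- The generator `ρ⁻¹` of `Ĥ_d^ext`. -/
def eRi (d : ℕ) : ExtHecke d := RingQuot.mkAlgHom kk (ExtRel d) (fRi d)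

/-- `T_i⁻¹ = T_i + q - q⁻¹` in `Ĥ_d^ext`. -/
def eTinv (d : ℕ) (i : ZMod d) : ExtHecke d :=
  eT d i + algebraMap kk (ExtHecke d) (qq - qq⁻¹)

/-- The affine Hecke algebra `Ĥ_d`, i.e. the `k`-subalgebra of `Ĥ_d^ext`
generated by `T_0, …, T_{d-1}`. -/
def AffHecke (d : ℕ) : Subalgebra kk (ExtHecke d) :=
  Algebra.adjoin kk (Set.range (eT d))

/-- The free `k`-algebra used to present the finite Hecke algebra;
only the generators `gT i` with `1 ≤ i ≤ d - 1` survive in the quotient. -/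
abbrev FH : Type := FreeAlgebra kk ℕ

def gT (i : ℕ) : FH := FreeAlgebra.ι kk i

/-- Defining relations of the finite Hecke algebra `H_d` (with the superfluous
generators `gT i`, for `i = 0` or `i ≥ d`, set to zero). -/
inductive HRel (d : ℕ) : FH → FH → Prop
  | out (i : ℕ) : ¬(1 ≤ i ∧ i < d) → HRel d (gT i) 0
  | quad (i : ℕ) : 1 ≤ i → i < d →
      HRel d ((gT i + algebraMap kk FH qq) * (gT i - algebraMap kk FH qq⁻¹)) 0
  | comm (i j : ℕ) : 1 ≤ i → i < d → 1 ≤ j → j < d → i + 1 < j ∨ j + 1 < i →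
      HRel d (gT i * gT j) (gT j * gT i)
  | braid (i : ℕ) : 1 ≤ i → i + 1 < d →
      HRel d (gT i * gT (i + 1) * gT i) (gT (i + 1) * gT i * gT (i + 1))

/-- The finite Hecke algebra `H_d`. -/
abbrev Hecke (d : ℕ) : Type := RingQuot (HRel d)

/-- The generator `T_i` of `H_d`. -/
def hT (d : ℕ) (i : ℕ) : Hecke d := RingQuot.mkAlgHom kk (HRel d) (gT i)

/-- `T_i⁻¹ = T_i + q - q⁻¹` in `H_d`. -/
def hTinv (d : ℕ) (i : ℕ) : Hecke d := hT d i + algebraMap kk (Hecke d) (qq - qq⁻¹)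

/-- `T_1 T_2 ⋯ T_{d-1}` in `H_d`. -/
def hAsc (d : ℕ) : Hecke d := (((List.range (d - 1)).map fun i => hT d (i + 1))).prod

/-- `T_1⁻¹ T_2⁻¹ ⋯ T_{d-1}⁻¹` in `H_d`. -/
def hInvAsc (d : ℕ) : Hecke d := (((List.range (d - 1)).map fun i => hTinv d (i + 1))).prod

/-- The defining property of the evaluation map `ev_a : Ĥ_d^ext → H_d`:
it sends `T_i ↦ T_i` for `1 ≤ i ≤ d - 1` and `ρ ↦ a ⬝ T_1⁻¹ T_2⁻¹ ⋯ T_{d-1}⁻¹`. -/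
def IsEv (d : ℕ) (a : kk) (f : ExtHecke d →ₐ[kk] Hecke d) : Prop :=
  (∀ i : ℕ, 1 ≤ i → i < d → f (eT d (i : ZMod d)) = hT d i) ∧
    f (eR d) = a • hInvAsc d

/-- The defining property of the evaluation map `ev'_a : Ĥ_d^ext → H_d`:
it sends `T_i ↦ T_i` for `1 ≤ i ≤ d - 1` and `ρ ↦ a ⬝ T_1 T_2 ⋯ T_{d-1}`. -/
def IsEv' (d : ℕ) (a : kk) (f : ExtHecke d →ₐ[kk] Hecke d) : Prop :=
  (∀ i : ℕ, 1 ≤ i → i < d → f (eT d (i : ZMod d)) = hT d i) ∧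
    f (eR d) = a • hAsc d


/-! ### Braid words in a monoid -/

section Braid

variable {M : Type*} [Monoid M]

/-- The word `s_0 s_1 ⋯ s_{m-1}`. -/
def ascProd (s : ℕ → M) (m : ℕ) : M := ((List.range m).map s).prod

lemma ascProd_succ (s : ℕ → M) (m : ℕ) : ascProd s (m + 1) = ascProd s m * s m := by
  simp [ascProd, List.range_succ]

lemma ascProd_succ' (s : ℕ → M) (m : ℕ) :
    ascProd s (m + 1) = s 0 * ascProd (fun i => s (i + 1)) m := by
  simp [ascProd, List.range_succ_eq_map, Function.comp_def]

/-- The relations of the braid group on the strands `0, …, n`, imposed on `s_0, …, s_{n-1}`. -/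
structure IsBraid (s : ℕ → M) (n : ℕ) : Prop where
  comm : ∀ i j, i + 1 < j → j < n → s i * s j = s j * s i
  braid : ∀ i, i + 1 < n → s i * s (i + 1) * s i = s (i + 1) * s i * s (i + 1)

variable {s : ℕ → M} {n : ℕ}

lemma IsBraid.ascProd_comm (h : IsBraid s n) {j : ℕ} (hj : j < n) {m : ℕ} (hm : m < j) :
    ascProd s m * s j = s j * ascProd s m := by
  induction m with
  | zero => simp [ascProd]
  | succ m ih =>
    rw [ascProd_succ, mul_assoc, h.comm m j hm hj, ← mul_assoc, ih (by omega), mul_assoc]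

/-- The Coxeter word shifts the generators: the factors after `s_{i+1}` commute with `s_i`, the
braid relation turns `s_i` into `s_{i+1}`, and the factors before `s_i` commute with `s_{i+1}`. -/
lemma IsBraid.ascProd_mul (h : IsBraid s n) {i m : ℕ} (him : i + 2 ≤ m) (hm : m ≤ n) :
    ascProd s m * s i = s (i + 1) * ascProd s m := by
  induction m, him using Nat.le_induction with
  | base =>
    have h1 := h.ascProd_comm (j := i + 1) (m := i) (by omega) (by omega)
    have h2 := h.braid i (by omega)
    rw [ascProd_succ, ascProd_succ]
    calc ascProd s i * s i * s (i + 1) * s i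
        = ascProd s i * (s i * s (i + 1) * s i) := by simp only [mul_assoc]
      _ = ascProd s i * s (i + 1) * (s i * s (i + 1)) := by rw [h2]; simp only [mul_assoc]
      _ = _ := by rw [h1]; simp only [mul_assoc]
  | succ m hm' ih =>
    rw [ascProd_succ, mul_assoc, ← h.comm i m (by omega) (by omega), ← mul_assoc,
      ih (by omega), mul_assoc]

lemma IsBraid.ascProd_mul_ascProd (h : IsBraid s n) {m : ℕ} (hm : m + 1 ≤ n) :
    ascProd s n * ascProd s m = ascProd (fun i => s (i + 1)) m * ascProd s n := by
  induction m with
  | zero => simp [ascProd]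
  | succ m ih =>
    rw [ascProd_succ, ascProd_succ, ← mul_assoc, ih (by omega), mul_assoc,
      h.ascProd_mul (by omega) le_rfl, mul_assoc]

/-- With `P = s_0 ⋯ s_n`, shifting the first `n` letters of the second factor gives
`P² = (s_1 ⋯ s_n) P s_n`; now multiply by `s_0` on the left. -/
lemma IsBraid.ascProd_sq (h : IsBraid s (n + 1)) :
    ascProd s (n + 1) * (ascProd s (n + 1) * s n) =
      s 0 * (ascProd s (n + 1) * ascProd s (n + 1)) := by
  have h1 := h.ascProd_mul_ascProd (m := n) le_rfl
  conv_rhs => rw [ascProd_succ s n, ← mul_assoc (_ * _), ← ascProd_succ, h1]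
  rw [← mul_assoc, ← mul_assoc, ← mul_assoc, ← ascProd_succ', mul_assoc]

end Braid

lemma IsBraid.inv {G : Type*} [Group G] {s : ℕ → G} {n : ℕ} (h : IsBraid s n) :
    IsBraid (fun i => (s i)⁻¹) n where
  comm i j hij hj := by simp only [← mul_inv_rev, h.comm i j hij hj]
  braid i hi := by simpa [mul_assoc] using congrArg (·⁻¹) (h.braid i hi)

/-! ### The generators of the finite Hecke algebra -/

lemma hT_quad (d i : ℕ) (h1 : 1 ≤ i) (h2 : i < d) :
    (hT d i + algebraMap kk _ qq) * (hT d i - algebraMap kk _ qq⁻¹) = 0 := by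
  simpa [hT] using RingQuot.mkAlgHom_rel kk (HRel.quad (d := d) i h1 h2)

lemma qq_ne_zero : qq ≠ 0 := RatFunc.X_ne_zero

lemma hT_mul_hTinv (d i : ℕ) (h1 : 1 ≤ i) (h2 : i < d) : hT d i * hTinv d i = 1 := by
  have h := hT_quad d i h1 h2
  have hq : algebraMap kk (Hecke d) qq * algebraMap kk (Hecke d) qq⁻¹ = 1 := by
    rw [← map_mul, mul_inv_cancel₀ qq_ne_zero, map_one]
  have hc := Algebra.commutes qq (hT d i)
  rw [add_mul, mul_sub, mul_sub, hq, hc] at h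
  rw [hTinv, map_sub, mul_add, mul_sub]
  rw [← sub_eq_zero, ← h]
  abel

lemma hTinv_mul_hT (d i : ℕ) (h1 : 1 ≤ i) (h2 : i < d) : hTinv d i * hT d i = 1 := by
  rw [← hT_mul_hTinv d i h1 h2, hTinv, mul_add, add_mul, Algebra.commutes]

/-- `T_{i+1}` as a unit of `H_d`, with the value `1` when `i + 1` is not a valid index. The index
is shifted so that the words of the previous section start at `T_1`. -/
def uT (d i : ℕ) : (Hecke d)ˣ :=
  if h : i + 1 < d then
    ⟨hT d (i + 1), hTinv d (i + 1), hT_mul_hTinv d _ (by omega) h, hTinv_mul_hT d _ (by omega) h⟩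
  else 1

lemma uT_val {d i : ℕ} (h : i + 1 < d) : (uT d i : Hecke d) = hT d (i + 1) := by
  simp [uT, h]

lemma uT_inv_val {d i : ℕ} (h : i + 1 < d) :
    (((uT d i)⁻¹ : (Hecke d)ˣ) : Hecke d) = hTinv d (i + 1) := by
  simp [uT, h]

lemma uT_isBraid (d : ℕ) : IsBraid (uT d) (d - 1) where
  comm i j hij hj := by
    ext
    push_cast
    rw [uT_val (by omega), uT_val (by omega)]
    simpa [hT] using RingQuot.mkAlgHom_rel kk (HRel.comm (d := d) (i + 1) (j + 1) (by omega)
      (by omega) (by omega) (by omega) (by omega))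
  braid i hi := by
    ext
    push_cast
    rw [uT_val (by omega), uT_val (by omega)]
    simpa [hT] using RingQuot.mkAlgHom_rel kk (HRel.braid (d := d) (i + 1) (by omega) (by omega))

lemma ascProd_uT_val (d : ℕ) : ((ascProd (uT d) (d - 1) : (Hecke d)ˣ) : Hecke d) = hAsc d := by
  rw [ascProd, hAsc, ← Units.coeHom_apply, map_list_prod, List.map_map]
  congr 1
  refine List.map_congr_left fun i hi => ?_
  exact uT_val (by have := List.mem_range.1 hi; omega)

lemma ascProd_uT_inv_val (d : ℕ) :
    ((ascProd (fun i => (uT d i)⁻¹) (d - 1) : (Hecke d)ˣ) : Hecke d) = hInvAsc d := by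
  rw [ascProd, hInvAsc, ← Units.coeHom_apply, map_list_prod, List.map_map]
  congr 1
  refine List.map_congr_left fun i hi => ?_
  exact uT_inv_val (by have := List.mem_range.1 hi; omega)

/-! ### Relations in the extended affine Hecke algebra -/

lemma eR_mul_eRi (d : ℕ) : eR d * eRi d = 1 := by
  simpa [eR, eRi] using RingQuot.mkAlgHom_rel kk (ExtRel.rhoMulInv (d := d))

lemma eR_conj (d : ℕ) (i : ZMod d) : eR d * eT d i * eRi d = eT d (i + 1) := by
  simpa [eR, eRi, eT] using RingQuot.mkAlgHom_rel kk (ExtRel.rhoConj (d := d) i)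

/-! ### The universal property -/

lemma zmod_val_add_one {d : ℕ} (hd : 3 ≤ d) (i : ZMod d) :
    (i + 1).val = if i.val + 1 = d then 0 else i.val + 1 := by
  have : NeZero d := ⟨by omega⟩
  have : Fact (1 < d) := ⟨by omega⟩
  have hi := i.val_lt
  rw [ZMod.val_add, ZMod.val_one]
  split_ifs with h
  · rw [h, Nat.mod_self]
  · exact Nat.mod_eq_of_lt (by omega)

/-- A property invariant under the shift `i ↦ i + 1` of `ℤ/d` may be checked at `1`. -/
lemma zmod_rotate {d : ℕ} (hd : 3 ≤ d) {p : ZMod d → Prop} (h1 : p 1)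
    (hs : ∀ i, p i → p (i + 1)) (i : ZMod d) : p i := by
  have : NeZero d := ⟨by omega⟩
  have key : ∀ n : ℕ, p (1 + n) := by
    intro n
    induction n with
    | zero => simpa using h1
    | succ n ih => simpa [add_assoc] using hs _ ih
  simpa using key (i - 1).val

/-- The images of the `T_i`, `i ∈ ℤ/d`, under an evaluation map sending `ρ` to `R`: the image of
`T_0` is forced to be `R T_{d-1} R⁻¹`. -/
def tEv (d : ℕ) (R : (Hecke d)ˣ) (i : ZMod d) : (Hecke d)ˣ :=
  if i.val = 0 then R * uT d (d - 2) * R⁻¹ else uT d (i.val - 1)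

section Ev

variable {d : ℕ} (hd : 3 ≤ d) {R : (Hecke d)ˣ}
  (hR : ∀ i, i + 2 < d → R * uT d i = uT d (i + 1) * R)
  (hR2 : R * (R * uT d (d - 2)) = uT d 0 * (R * R))

lemma tEv_natCast {i : ℕ} (R : (Hecke d)ˣ) (h1 : 1 ≤ i) (h2 : i < d) :
    tEv d R (i : ZMod d) = uT d (i - 1) := by
  rw [tEv, ZMod.val_cast_of_lt h2, if_neg (by omega)]

include hd hR hR2 in
/-- `R`-conjugation cyclically permutes the `tEv`; the step from `0` to `1` is `hR2`. -/
lemma tEv_conj (i : ZMod d) : R * tEv d R i * R⁻¹ = tEv d R (i + 1) := by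
  have : NeZero d := ⟨by omega⟩
  have hi := i.val_lt
  rw [tEv, tEv, zmod_val_add_one hd]
  by_cases h0 : i.val = 0
  · rw [if_pos h0, if_neg (by omega : ¬ i.val + 1 = d), if_neg (by omega), h0]
    rw [mul_inv_eq_iff_eq_mul, ← mul_assoc, mul_inv_eq_iff_eq_mul, hR2]
    simp [mul_assoc]
  by_cases h1 : i.val + 1 = d
  · rw [if_neg h0, if_pos h1, if_pos rfl, show i.val - 1 = d - 2 by omega]
  · rw [if_neg h0, if_neg h1, if_neg (by omega), mul_inv_eq_iff_eq_mul, hR _ (by omega)]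
    congr 2
    omega

include hd hR hR2 in
lemma tEv_braid (i : ZMod d) :
    tEv d R i * tEv d R (i + 1) * tEv d R i = tEv d R (i + 1) * tEv d R i * tEv d R (i + 1) := by
  refine zmod_rotate hd (p := fun i => tEv d R i * tEv d R (i + 1) * tEv d R i =
    tEv d R (i + 1) * tEv d R i * tEv d R (i + 1)) ?_ (fun i ih => ?_) i
  · have h1 := tEv_natCast (i := 1) R le_rfl (by omega : 1 < d)
    have h2 := tEv_natCast (i := 2) R (by omega) (by omega : 2 < d)
    rw [Nat.cast_one] at h1
    rw [Nat.cast_ofNat] at h2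
    rw [one_add_one_eq_two, h1, h2]
    exact (uT_isBraid d).braid 0 (by omega)
  · have := congrArg (fun x => R * x * R⁻¹) ih
    have h : (R * tEv d R i * R⁻¹) * (R * tEv d R (i + 1) * R⁻¹) * (R * tEv d R i * R⁻¹) =
        (R * tEv d R (i + 1) * R⁻¹) * (R * tEv d R i * R⁻¹) * (R * tEv d R (i + 1) * R⁻¹) := by
      simpa [mul_assoc] using this
    rwa [tEv_conj hd hR hR2, tEv_conj hd hR hR2] at h

include hd hR hR2 in
/-- By rotating, it suffices to treat the pairs `(1, 1 + m)`; non-adjacency means that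
`m = 0` or `2 ≤ m ≤ d - 2`, so both indices lie in `1, …, d - 1`. -/
lemma tEv_comm (i j : ZMod d) (hij : i ≠ j + 1) (hji : j ≠ i + 1) :
    tEv d R i * tEv d R j = tEv d R j * tEv d R i := by
  have : NeZero d := ⟨by omega⟩
  obtain ⟨m, rfl⟩ : ∃ m, j = i + m := ⟨j - i, by ring⟩
  have hm1 : m ≠ 1 := fun h => hji (by rw [h])
  have hm2 : m + 1 ≠ 0 := fun h => hij (by rw [add_assoc, h, add_zero])
  refine zmod_rotate hd (p := fun i => tEv d R i * tEv d R (i + m) =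
    tEv d R (i + m) * tEv d R i) ?_ (fun i ih => ?_) i
  · have hlt := m.val_lt
    have hv : m.val + 1 ≠ d := by
      intro h
      apply hm2
      rw [← ZMod.natCast_zmod_val m, ← Nat.cast_one, ← Nat.cast_add, h, ZMod.natCast_self]
    have hv1 : m.val ≠ 1 := by
      intro h
      apply hm1
      rw [← ZMod.natCast_zmod_val m, h, Nat.cast_one]
    have h1 := tEv_natCast (i := 1) R le_rfl (by omega : 1 < d)
    have h2 := tEv_natCast (i := 1 + m.val) R (by omega) (by omega)
    rw [Nat.cast_one] at h1
    rw [Nat.cast_add, ZMod.natCast_zmod_val, Nat.cast_one] at h2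
    rw [h1, h2]
    rcases Nat.eq_zero_or_pos m.val with h0 | h0
    · rw [h0]
    · exact (uT_isBraid d).comm _ _ (by omega) (by omega)
  · have := congrArg (fun x => R * x * R⁻¹) ih
    rw [add_right_comm]
    simp only [← tEv_conj hd hR hR2]
    simpa [mul_assoc] using this

include hd hR hR2 in
lemma tEv_quad (i : ZMod d) :
    ((tEv d R i : Hecke d) + algebraMap kk _ qq) * ((tEv d R i : Hecke d) - algebraMap kk _ qq⁻¹)
      = 0 := by
  refine zmod_rotate hd (p := fun i => ((tEv d R i : Hecke d) + algebraMap kk _ qq) *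
    ((tEv d R i : Hecke d) - algebraMap kk _ qq⁻¹) = 0) ?_ (fun i ih => ?_) i
  · have h1 := tEv_natCast (i := 1) R le_rfl (by omega : 1 < d)
    rw [Nat.cast_one] at h1
    rw [h1, uT_val (by omega)]
    exact hT_quad d 1 le_rfl (by omega)
  · have hc : ∀ c : kk, algebraMap kk (Hecke d) c =
        (R : Hecke d) * algebraMap kk _ c * ((R⁻¹ : (Hecke d)ˣ) : Hecke d) := fun c => by
      rw [← Algebra.commutes, mul_assoc, Units.mul_inv, mul_one]
    rw [← tEv_conj hd hR hR2, hc qq, hc qq⁻¹]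
    push_cast
    rw [← add_mul, ← mul_add, ← sub_mul, ← mul_sub]
    have := congrArg (fun x => (R : Hecke d) * x * ((R⁻¹ : (Hecke d)ˣ) : Hecke d)) ih
    simpa [mul_assoc] using this

/-- The images of the generators of `Ĥ_d^ext`. -/
def genEv (d : ℕ) (R : (Hecke d)ˣ) : ExtGen d → Hecke d
  | ExtGen.T i => tEv d R i
  | ExtGen.rho => R
  | ExtGen.rhoInv => (R⁻¹ : (Hecke d)ˣ)

include hd hR hR2 in
lemma genEv_rel {x y : FE d} (h : ExtRel d x y) :
    FreeAlgebra.lift kk (genEv d R) x = FreeAlgebra.lift kk (genEv d R) y := by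
  induction h with
  | quad i => simpa [fT, genEv] using tEv_quad hd hR hR2 i
  | comm i j hij hji =>
    simpa [fT, genEv] using congrArg Units.val (tEv_comm hd hR hR2 i j hij hji)
  | braid i => simpa [fT, genEv] using congrArg Units.val (tEv_braid hd hR hR2 i)
  | rhoMulInv => simp [fR, fRi, genEv]
  | rhoInvMul => simp [fR, fRi, genEv]
  | rhoConj i => simpa [fT, fR, fRi, genEv] using congrArg Units.val (tEv_conj hd hR hR2 i)

include hd hR hR2 in
/-- A unit `R` of `H_d` arises as the image of `ρ` as soon as conjugation by `R` shifts
`T_1, …, T_{d-2}` and conjugation by `R²` takes `T_{d-1}` to `T_1`. -/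
lemma existsUnique_ev : ∃! f : ExtHecke d →ₐ[kk] Hecke d,
    (∀ i : ℕ, 1 ≤ i → i < d → f (eT d (i : ZMod d)) = hT d i) ∧ f (eR d) = R := by
  refine ⟨RingQuot.liftAlgHom kk ⟨FreeAlgebra.lift kk (genEv d R),
    fun _ _ h => genEv_rel hd hR hR2 h⟩, ⟨fun i h1 h2 => ?_, ?_⟩, ?_⟩
  · rw [eT, RingQuot.liftAlgHom_mkAlgHom_apply, fT, FreeAlgebra.lift_ι_apply, genEv,
      tEv_natCast R h1 h2, uT_val (by omega), Nat.sub_add_cancel h1]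
  · rw [eR, RingQuot.liftAlgHom_mkAlgHom_apply, fR, FreeAlgebra.lift_ι_apply, genEv]
  · rintro f ⟨hT', hρ⟩
    have : NeZero d := ⟨by omega⟩
    have hρi : f (eRi d) = ((R⁻¹ : (Hecke d)ˣ) : Hecke d) := by
      refine Units.eq_inv_of_mul_eq_one_left ?_
      rw [← hρ, ← map_mul, eR_mul_eRi, map_one]
    have hne : ∀ i : ℕ, 1 ≤ i → i < d → f (eT d (i : ZMod d)) = tEv d R i := fun i h1 h2 => by
      rw [hT' i h1 h2, tEv_natCast R h1 h2, uT_val (by omega), Nat.sub_add_cancel h1]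
    have hall : ∀ i : ZMod d, f (eT d i) = tEv d R i := by
      refine zmod_rotate hd ?_ fun i ih => ?_
      · simpa using hne 1 le_rfl (by omega)
      · rw [← eR_conj, ← tEv_conj hd hR hR2, map_mul, map_mul, ih, hρ, hρi]
        push_cast
        rfl
    refine RingQuot.ringQuot_ext' kk _ _ (FreeAlgebra.hom_ext (funext fun g => ?_))
    rcases g with i | _ | _
    · simpa [genEv, eT, fT] using hall i
    · simpa [genEv, eR, fR] using hρ
    · simpa [genEv, eRi, fRi] using hρi

end Ev

/-- The unit `a` times `P`: scalars are central, so it conjugates in the same way as `P`. -/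
lemma existsUnique_ev_smul {d : ℕ} (hd : 3 ≤ d) (a : kkˣ) (P : (Hecke d)ˣ)
    (hP : ∀ i, i + 2 < d → P * uT d i = uT d (i + 1) * P)
    (hP2 : P * (P * uT d (d - 2)) = uT d 0 * (P * P)) :
    ∃! f : ExtHecke d →ₐ[kk] Hecke d,
      (∀ i : ℕ, 1 ≤ i → i < d → f (eT d (i : ZMod d)) = hT d i) ∧
        f (eR d) = (a : kk) • (P : Hecke d) := by
  set z : (Hecke d)ˣ := Units.map (algebraMap kk (Hecke d)).toMonoidHom a with hz
  have hc : ∀ x : (Hecke d)ˣ, x * z = z * x := fun x => by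
    ext
    exact (Algebra.commutes (a : kk) (x : Hecke d)).symm
  have hval : ((z * P : (Hecke d)ˣ) : Hecke d) = (a : kk) • (P : Hecke d) := by
    rw [Algebra.smul_def]
    rfl
  rw [← hval]
  refine existsUnique_ev hd (fun i hi => ?_) ?_
  · rw [mul_assoc, hP i hi, ← mul_assoc, ← hc, mul_assoc]
  · calc z * P * (z * P * uT d (d - 2)) = z * (P * z) * (P * uT d (d - 2)) := by
          simp only [mul_assoc]
      _ = z * z * (P * (P * uT d (d - 2))) := by rw [hc]; simp only [mul_assoc]
      _ = z * (z * uT d 0) * (P * P) := by rw [hP2]; simp only [mul_assoc]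
      _ = z * (uT d 0 * z) * (P * P) := by rw [hc (uT d 0)]
      _ = z * uT d 0 * (z * P) * P := by simp only [mul_assoc]
      _ = uT d 0 * z * (P * z) * P := by rw [← hc (uT d 0), ← hc P]
      _ = uT d 0 * (z * P * (z * P)) := by simp only [mul_assoc]

/-- for every `a ∈ k^×` there are unique `k`-algebra homomorphisms
`ev_a, ev'_a : Ĥ_d^ext → H_d` with `ev_a(T_i) = T_i`, `ev_a(ρ) = a T_1⁻¹ ⋯ T_{d-1}⁻¹`
and `ev'_a(T_i) = T_i`, `ev'_a(ρ) = a T_1 ⋯ T_{d-1}`. -/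
theorem statement0 (d : ℕ) (hd : 3 ≤ d) (a : kkˣ) :
    (∃! f : ExtHecke d →ₐ[kk] Hecke d, IsEv d (a : kk) f) ∧
    (∃! f : ExtHecke d →ₐ[kk] Hecke d, IsEv' d (a : kk) f) := by
  obtain ⟨n, rfl⟩ : ∃ n, d = n + 2 := ⟨d - 2, by omega⟩
  have hB : IsBraid (uT (n + 2)) (n + 1) := uT_isBraid (n + 2)
  have hB' := hB.inv
  constructor
  · have h := existsUnique_ev_smul hd a
      (ascProd (fun i => (uT (n + 2) i)⁻¹) (n + 1)) (fun i hi => ?_) ?_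
    · rwa [show n + 1 = n + 2 - 1 from rfl, ascProd_uT_inv_val] at h
    -- the inverses satisfy the braid relations too; the relation for `T_i⁻¹` is equivalent to
    -- the one for `T_i`
    · have h1 := hB'.ascProd_mul (i := i) (m := n + 1) (by omega) le_rfl
      rw [eq_inv_mul_iff_mul_eq, ← mul_assoc, mul_inv_eq_iff_eq_mul] at h1
      exact h1.symm
    · have h1 := hB'.ascProd_sq
      rw [eq_inv_mul_iff_mul_eq, ← mul_assoc, ← mul_assoc, mul_inv_eq_iff_eq_mul] at h1
      simpa [mul_assoc] using h1.symm
  · have h := existsUnique_ev_smul hd a (ascProd (uT (n + 2)) (n + 1)) (fun i hi => ?_) ?_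
    · rwa [show n + 1 = n + 2 - 1 from rfl, ascProd_uT_val] at h
    · exact hB.ascProd_mul (by omega) le_rfl
    · exact hB.ascProd_sq

end PaperEval
end
end

section
/- For every z ∈ k^×, there is a unique Ĥ_d-module structure on the k-vector space with basis m_0, …, m_{d−1} (indices modulo d) such that, writing b_i := T_i + q, for all i, j ∈ {0, …, d−1}: b_i m_j = (q + q^{-1}) m_i if j ≡ i (mod d); b_1 m_0 = z m_1; b_0 m_1 = z^{-1} m_0; b_i m_j = m_i if j ≡ i ± 1 (mod d) and (i,j) ∉ {(1,0),(0,1)}; and b_i m_j = 0 otherwise. -/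
/-!
Each `b_i` acts by a rank one operator `m_j ↦ c i j • m_i`. The coefficients satisfy
`c i i = q + q⁻¹`, `c i j * c j i = 1` for neighbouring `i, j`, and `c i j = 0` for distant ones,
so that the operators satisfy the Temperley–Lieb relations; these imply the quadratic, commutation
and braid relations for `T_i = b_i - q`. Here `d ≥ 3` ensures that `1` and `2` are nonzero modulo
`d`, so that `j + 1` and `j - 1` are distinct neighbours of `j`.

The algebra `Ĥ_d` is defined as a subalgebra of `Ĥ_d^ext` rather than by a presentation, so
existence is obtained by extending the representation to `Ĥ_d^ext`, letting `ρ` act by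
`m_0 ↦ z m_1` and `m_j ↦ m_{j+1}` for `j ≠ 0`, and restricting. Uniqueness
holds because the `T_i` generate `Ĥ_d` and the `m_j` span.
-/

/-! Hecke algebras of finite and (extended) affine type A, and evaluation maps. -/

set_option synthInstance.maxHeartbeats 1000000
set_option maxHeartbeats 2000000

noncomputable section

open scoped Classical

namespace PaperEval

/-- The underlying `k`-vector space of the Graham–Lehrer cell module,
with basis `m_0, …, m_{d-1}` indexed by `ZMod d`. -/
abbrev VV (d : ℕ) : Type := ZMod d → kk

/-- The basis vector `m_j`. -/
def em (d : ℕ) (j : ZMod d) : VV d := Pi.single j 1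

/-- The value of `b_i m_j` in the Graham–Lehrer cell module `M̂_z`:
`b_i m_j = (q + q⁻¹) m_i` if `j ≡ i`; `b_1 m_0 = z m_1`; `b_0 m_1 = z⁻¹ m_0`;
`b_i m_j = m_i` if `j ≡ i ± 1` and `(i,j) ∉ {(1,0),(0,1)}`; and `0` otherwise. -/
def GLact (d : ℕ) (z : kk) (i j : ZMod d) : VV d :=
  if j = i then (qq + qq⁻¹) • em d i
  else if i = 1 ∧ j = 0 then z • em d 1
  else if i = 0 ∧ j = 1 then z⁻¹ • em d 0
  else if j = i + 1 ∨ j = i - 1 then em d i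
  else 0

/-- `b_i = T_i + q` as an element of the affine Hecke algebra `Ĥ_d ⊆ Ĥ_d^ext`. -/
def ab (d : ℕ) (i : ZMod d) : AffHecke d :=
  (⟨eT d i, Algebra.subset_adjoin ⟨i, rfl⟩⟩ : AffHecke d) + algebraMap kk (AffHecke d) qq

/-- A Graham–Lehrer `Ĥ_d^ext`-module structure on `VV d` with parameters `z, λ`:
`b_i m_j` as in `M̂_z` and `ρ m_j = λ z^{δ_{j,0}} m_{j+1}`.  This is the module
`M̂_{z,λ}`, encoded by the corresponding algebra map into `End_k(VV d)`. -/
def IsGL (d : ℕ) (z l : kk) (β : ExtHecke d →ₐ[kk] Module.End kk (VV d)) : Prop :=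
  (∀ i j : ZMod d,
      β (eT d i + algebraMap kk (ExtHecke d) qq) (em d j) = GLact d z i j) ∧
    (∀ j : ZMod d, β (eR d) (em d j) = (if j = 0 then z * l else l) • em d (j + 1))

/-- `n_+ = ∑_{k=1}^{d} (-q)^{-k} m_k` (with `m_d = m_0`). -/
def nPlus (d : ℕ) : VV d := ∑ k ∈ Finset.Icc 1 d, ((-qq) ^ k)⁻¹ • em d (k : ZMod d)

/-- `n_- = ∑_{k=1}^{d} (-q)^{k} m_k` (with `m_d = m_0`). -/
def nMinus (d : ℕ) : VV d := ∑ k ∈ Finset.Icc 1 d, ((-qq) ^ k) • em d (k : ZMod d)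
/-! ### The structure constants -/

section StructureConstants

variable {d : ℕ} (z : kk)

lemma two_ne_zero_zmod (hd : 3 ≤ d) : (2 : ZMod d) ≠ 0 := by
  intro h
  have h' : ((2 : ℕ) : ZMod d) = 0 := by exact_mod_cast h
  rw [ZMod.natCast_eq_zero_iff] at h'
  have := Nat.le_of_dvd (by norm_num) h'
  omega

lemma one_ne_zero_zmod (hd : 3 ≤ d) : (1 : ZMod d) ≠ 0 := by
  intro h
  apply two_ne_zero_zmod hd
  rw [← one_add_one_eq_two, h, add_zero]

/-- The coefficient `c i j` in `b_i m_j = c i j • m_i`. -/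
def coef (d : ℕ) (z : kk) (i j : ZMod d) : kk :=
  if j = i then qq + qq⁻¹
  else if i = 1 ∧ j = 0 then z
  else if i = 0 ∧ j = 1 then z⁻¹
  else if j = i + 1 ∨ j = i - 1 then 1
  else 0

/-- The coefficient in `ρ m_j = r j • m_{j+1}`. -/
def rcoef (d : ℕ) (z : kk) (j : ZMod d) : kk := if j = 0 then z else 1

lemma GLact_eq (i j : ZMod d) : GLact d z i j = coef d z i j • em d i := by
  unfold GLact coef
  split_ifs with h1 h2 h3 h4
  · rfl
  · rw [h2.1]
  · rw [h3.1]
  · rw [one_smul]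
  · rw [zero_smul]

lemma coef_self (i : ZMod d) : coef d z i i = qq + qq⁻¹ := if_pos rfl

lemma coef_succ_right (hd : 3 ≤ d) (i : ZMod d) :
    coef d z i (i + 1) = if i = 0 then z⁻¹ else 1 := by
  have h1 := one_ne_zero_zmod hd
  have h2 := two_ne_zero_zmod hd
  unfold coef
  rw [if_neg (by simpa using h1), if_neg (by rintro ⟨rfl, h⟩; exact h2 (by linear_combination h))]
  by_cases h : i = 0
  · subst h; simp
  · simp [h]

lemma coef_succ_left (hd : 3 ≤ d) (i : ZMod d) :
    coef d z (i + 1) i = if i = 0 then z else 1 := by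
  have h1 := one_ne_zero_zmod hd
  have h2 := two_ne_zero_zmod hd
  unfold coef
  rw [if_neg (fun h => h1 (by linear_combination -h))]
  by_cases h : i = 0
  · subst h; simp
  · rw [if_neg (fun h' => h h'.2), if_neg, if_pos (Or.inr (by ring)), if_neg h]
    rintro ⟨h3, h4⟩
    exact h2 (by linear_combination h3 - h4)

lemma coef_far (i j : ZMod d) (h0 : j ≠ i) (h1 : j ≠ i + 1) (h2 : i ≠ j + 1) :
    coef d z i j = 0 := by
  unfold coef
  rw [if_neg h0, if_neg, if_neg, if_neg]
  · rintro (h | h)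
    · exact h1 h
    · exact h2 (by rw [h]; ring)
  · rintro ⟨rfl, rfl⟩; exact h1 (by ring)
  · rintro ⟨rfl, rfl⟩; exact h2 (by ring)

lemma coef_mul_coef (hz : z ≠ 0) (hd : 3 ≤ d) (i : ZMod d) :
    coef d z i (i + 1) * coef d z (i + 1) i = 1 := by
  rw [coef_succ_right z hd, coef_succ_left z hd]
  split_ifs
  · exact inv_mul_cancel₀ hz
  · exact one_mul 1

lemma rcoef_ne_zero (hz : z ≠ 0) (j : ZMod d) : rcoef d z j ≠ 0 := by
  unfold rcoef
  split_ifs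
  exacts [hz, one_ne_zero]

/-- The scalar identity equivalent to `ρ b_i m_j = b_{i+1} ρ m_j`. -/
lemma coef_rcoef (hz : z ≠ 0) (hd : 3 ≤ d) (i j : ZMod d) :
    coef d z i j * rcoef d z i = rcoef d z j * coef d z (i + 1) (j + 1) := by
  by_cases h0 : j = i
  · subst h0; rw [coef_self, coef_self, mul_comm]
  by_cases h1 : j = i + 1
  · subst h1
    rw [coef_succ_right z hd, coef_succ_right z hd]
    unfold rcoef
    have := one_ne_zero_zmod hd
    by_cases hi : i = 0
    · subst hi; simp [this, hz]
    · by_cases hi' : i + 1 = 0 <;> simp [hi, hi', hz]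
  by_cases h2 : i = j + 1
  · subst h2
    rw [coef_succ_left z hd, coef_succ_left z hd]
    unfold rcoef
    have := one_ne_zero_zmod hd
    by_cases hj : j = 0
    · subst hj; simp [this]
    · by_cases hj' : j + 1 = 0 <;> simp [hj, hj']
  rw [coef_far z i j h0 h1 h2, coef_far z (i + 1) (j + 1), zero_mul, mul_zero]
  · exact fun h => h0 (add_right_cancel h)
  · exact fun h => h1 (add_right_cancel h)
  · exact fun h => h2 (add_right_cancel h)

end StructureConstants

/-! ### The operators on the cell module -/

section Operators

variable {d : ℕ} [NeZero d] (z : kk)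

/-- The linear endomorphism of `VV d` with prescribed values on the basis `m_j`. -/
def ofBasis (d : ℕ) [NeZero d] (f : ZMod d → VV d) : Module.End kk (VV d) :=
  (Pi.basisFun kk (ZMod d)).constr kk f

lemma ofBasis_em (f : ZMod d → VV d) (j : ZMod d) : ofBasis d f (em d j) = f j := by
  have h := (Pi.basisFun kk (ZMod d)).constr_basis kk f j
  rwa [Pi.basisFun_apply] at h

lemma end_ext {f g : Module.End kk (VV d)} (h : ∀ j, f (em d j) = g (em d j)) : f = g := by
  refine (Pi.basisFun kk (ZMod d)).ext fun j => ?_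
  rw [Pi.basisFun_apply]
  exact h j

/-- The operator by which `b_i` acts. -/
def opB (d : ℕ) [NeZero d] (z : kk) (i : ZMod d) : Module.End kk (VV d) :=
  ofBasis d fun j => coef d z i j • em d i

/-- The operator by which `ρ` acts. -/
def opR (d : ℕ) [NeZero d] (z : kk) : Module.End kk (VV d) :=
  ofBasis d fun j => rcoef d z j • em d (j + 1)

/-- The inverse of `opR`. -/
def opRi (d : ℕ) [NeZero d] (z : kk) : Module.End kk (VV d) :=
  ofBasis d fun j => (rcoef d z (j - 1))⁻¹ • em d (j - 1)

lemma opB_em (i j : ZMod d) : opB d z i (em d j) = coef d z i j • em d i := ofBasis_em _ _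

lemma opR_em (j : ZMod d) : opR d z (em d j) = rcoef d z j • em d (j + 1) := ofBasis_em _ _

lemma opRi_em (j : ZMod d) :
    opRi d z (em d j) = (rcoef d z (j - 1))⁻¹ • em d (j - 1) := ofBasis_em _ _

lemma opR_mul_opRi (hz : z ≠ 0) : opR d z * opRi d z = 1 := by
  refine end_ext fun j => ?_
  rw [Module.End.mul_apply, opRi_em, map_smul, opR_em, smul_smul,
    inv_mul_cancel₀ (rcoef_ne_zero z hz _), one_smul, sub_add_cancel, Module.End.one_apply]

lemma opRi_mul_opR (hz : z ≠ 0) : opRi d z * opR d z = 1 := by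
  refine end_ext fun j => ?_
  rw [Module.End.mul_apply, opR_em, map_smul, opRi_em, smul_smul, add_sub_cancel_right,
    mul_inv_cancel₀ (rcoef_ne_zero z hz _), one_smul, Module.End.one_apply]

lemma opR_mul_opB (hz : z ≠ 0) (hd : 3 ≤ d) (i : ZMod d) :
    opR d z * opB d z i = opB d z (i + 1) * opR d z := by
  refine end_ext fun j => ?_
  rw [Module.End.mul_apply, Module.End.mul_apply, opB_em, map_smul, opR_em, smul_smul, opR_em,
    map_smul, opB_em, smul_smul, coef_rcoef z hz hd]

lemma opB_sq (i : ZMod d) : opB d z i * opB d z i = (qq + qq⁻¹) • opB d z i := by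
  refine end_ext fun j => ?_
  rw [Module.End.mul_apply, opB_em, map_smul, opB_em, LinearMap.smul_apply, opB_em, coef_self,
    smul_comm]

lemma opB_mul_far (i j : ZMod d) (h0 : j ≠ i) (h1 : j ≠ i + 1) (h2 : i ≠ j + 1) :
    opB d z i * opB d z j = 0 := by
  refine end_ext fun k => ?_
  rw [Module.End.mul_apply, opB_em, map_smul, opB_em, coef_far z i j h0 h1 h2, zero_smul,
    smul_zero, LinearMap.zero_apply]

lemma opB_mul_opB_mul_opB (i j : ZMod d) (h : coef d z i j * coef d z j i = 1) :
    opB d z i * opB d z j * opB d z i = opB d z i := by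
  refine end_ext fun k => ?_
  rw [Module.End.mul_apply, Module.End.mul_apply, opB_em, map_smul, opB_em, map_smul, map_smul,
    opB_em, smul_smul (coef d z j i), mul_comm (coef d z j i), h, one_smul]

end Operators

/-! ### From Temperley–Lieb to Hecke relations -/

section TemperleyLieb

variable {K A : Type*} [Field K] [Ring A] [Algebra K A]

lemma hecke_quad {q : K} {b : A} (hb : b * b = (q + q⁻¹) • b) :
    (b - algebraMap K A q + algebraMap K A q) *
      (b - algebraMap K A q - algebraMap K A q⁻¹) = 0 := by
  rw [sub_add_cancel, sub_sub, ← map_add, mul_sub, hb, ← Algebra.commutes, ← Algebra.smul_def,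
    sub_self]

/-- The Temperley–Lieb relations `b² = (q + q⁻¹) b` and `b c b = b`, `c b c = c` give the braid
relation for `b - q` and `c - q`: both sides expand to the same expression, symmetric in
`b` and `c`. -/
lemma hecke_braid {q : K} (hq0 : q ≠ 0) {b c : A} (hb : b * b = (q + q⁻¹) • b) (hc : c * c = (q + q⁻¹) • c)
    (hbc : b * c * b = b) (hcb : c * b * c = c) :
    (b - algebraMap K A q) * (c - algebraMap K A q) * (b - algebraMap K A q) =
      (c - algebraMap K A q) * (b - algebraMap K A q) * (c - algebraMap K A q) := by
  -- The side with outer letter `x` and inner letter `y`, expanded.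
  have key : ∀ x y : A, x * x = (q + q⁻¹) • x → x * y * x = x →
      (x - algebraMap K A q) * (y - algebraMap K A q) * (x - algebraMap K A q) =
        (q ^ 2) • (x + y) - q • (x * y + y * x) - (q ^ 3) • 1 := by
    intro x y hx hxy
    have e : (x - algebraMap K A q) * (y - algebraMap K A q) * (x - algebraMap K A q) =
        x * y * x - q • (x * y + y * x + x * x) + (q ^ 2) • (x + x + y) - (q ^ 3) • 1 := by
      simp only [Algebra.algebraMap_eq_smul_one, sub_mul, mul_sub, smul_mul_assoc, mul_smul_comm,
        one_mul, mul_one, smul_sub]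
      module
    have hq : q * (q + q⁻¹) = q ^ 2 + 1 := by
      rw [mul_add, mul_inv_cancel₀ hq0, pow_two]
    rw [e, hxy, smul_add q _ (x * x), hx, smul_smul, hq]
    module
  rw [key b c hb hbc, key c b hc hcb, add_comm b c, add_comm (b * c)]

end TemperleyLieb

/-! ### The representation -/

section Representation

variable {d : ℕ} [NeZero d]

/-- Images of the generators of `Ĥ_d^ext` under the cell representation. -/
def genImg (d : ℕ) [NeZero d] (z : kk) : ExtGen d → Module.End kk (VV d)
  | .T i => opB d z i - algebraMap kk _ qq
  | .rho => opR d z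
  | .rhoInv => opRi d z

lemma lift_rel (hd : 3 ≤ d) (z : kk) (hz : z ≠ 0) ⦃x y : FE d⦄ (h : ExtRel d x y) :
    FreeAlgebra.lift kk (genImg d z) x = FreeAlgebra.lift kk (genImg d z) y := by
  have hT : ∀ i, FreeAlgebra.lift kk (genImg d z) (fT d i) = opB d z i - algebraMap kk _ qq :=
    fun i => FreeAlgebra.lift_ι_apply _ _
  have hR : FreeAlgebra.lift kk (genImg d z) (fR d) = opR d z := FreeAlgebra.lift_ι_apply _ _
  have hRi : FreeAlgebra.lift kk (genImg d z) (fRi d) = opRi d z := FreeAlgebra.lift_ι_apply _ _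
  induction h with
  | quad i =>
    rw [map_mul, map_add, map_sub, hT, AlgHom.commutes, AlgHom.commutes, map_zero]
    exact hecke_quad (opB_sq z i)
  | comm i j h1 h2 =>
    rw [map_mul, map_mul, hT, hT]
    by_cases h0 : i = j
    · rw [h0]
    · have hc : Commute (opB d z i) (opB d z j) := by
        rw [Commute, SemiconjBy, opB_mul_far z i j (Ne.symm h0) h2 h1, opB_mul_far z j i h0 h1 h2]
      exact (hc.sub_left (Algebra.commutes _ _)).sub_right (Algebra.commute_algebraMap_right _ _)
  | braid i =>
    simp only [map_mul, hT]
    have h := coef_mul_coef z hz hd i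
    exact hecke_braid qq_ne_zero (opB_sq z i) (opB_sq z (i + 1)) (opB_mul_opB_mul_opB z _ _ h)
      (opB_mul_opB_mul_opB z _ _ (by rw [mul_comm, h]))
  | rhoMulInv => rw [map_mul, map_one, hR, hRi, opR_mul_opRi z hz]
  | rhoInvMul => rw [map_mul, map_one, hR, hRi, opRi_mul_opR z hz]
  | rhoConj i =>
    rw [map_mul, map_mul, hT, hT, hR, hRi, mul_sub, opR_mul_opB z hz hd, ← Algebra.commutes,
      ← sub_mul, mul_assoc, opR_mul_opRi z hz, mul_one]

/-- The extension of the cell representation to `Ĥ_d^ext`. -/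
def cellRep (hd : 3 ≤ d) (z : kk) (hz : z ≠ 0) : ExtHecke d →ₐ[kk] Module.End kk (VV d) :=
  RingQuot.liftAlgHom kk ⟨FreeAlgebra.lift kk (genImg d z), lift_rel hd z hz⟩

lemma cellRep_eT (hd : 3 ≤ d) (z : kk) (hz : z ≠ 0) (i : ZMod d) :
    cellRep hd z hz (eT d i) = opB d z i - algebraMap kk _ qq := by
  unfold cellRep eT
  rw [RingQuot.liftAlgHom_mkAlgHom_apply]
  exact FreeAlgebra.lift_ι_apply _ _

end Representation

/-- for every `z ∈ k^×` there is a unique `Ĥ_d`-module structure on the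
`k`-vector space with basis `m_0, …, m_{d-1}` satisfying the Graham–Lehrer formulas
for the action of the `b_i = T_i + q` on the basis. -/
theorem statement5 (d : ℕ) (hd : 3 ≤ d) (z : kkˣ) :
    ∃! α : (AffHecke d) →ₐ[kk] Module.End kk (VV d),
      ∀ i j : ZMod d, α (ab d i) (em d j) = GLact d (z : kk) i j := by
  have : NeZero d := ⟨by omega⟩
  refine ⟨(cellRep hd z z.ne_zero).comp (AffHecke d).val, fun i j => ?_, fun β hβ => ?_⟩
  · have h : (AffHecke d).val (ab d i) = eT d i + algebraMap kk (ExtHecke d) qq := rfl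
    rw [AlgHom.comp_apply, h, map_add, cellRep_eT, AlgHom.commutes, sub_add_cancel, opB_em,
      GLact_eq]
  · refine AlgHom.adjoin_ext fun x hx => ?_
    obtain ⟨i, rfl⟩ := hx
    -- `T_i = b_i - q`, and `β` is determined on `b_i` by its values on the basis.
    have hb : β (ab d i) = opB d z i := end_ext fun j => by rw [hβ, GLact_eq, opB_em]
    have h : β (ab d i) = β ⟨eT d i, Algebra.subset_adjoin ⟨i, rfl⟩⟩ +
        algebraMap kk _ qq := by
      unfold ab
      rw [map_add, AlgHom.commutes]
    change β ⟨eT d i, Algebra.subset_adjoin ⟨i, rfl⟩⟩ = cellRep hd z z.ne_zero (eT d i)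
    rw [cellRep_eT, ← hb, h, add_sub_cancel_right]

end PaperEval
end
end

section
/- For all z, λ ∈ k^×: if z ∉ {(−q)^d, (−q)^{−d}}, then rad(⟨·,·⟩) = 0; and if z = (−q)^d (resp. z = (−q)^{−d}), then rad(⟨·,·⟩) is the one-dimensional subspace of M̂_{z,λ} spanned by n_+ := Σ_{k=1}^{d} (−q)^{−k} m_k (resp. n_− := Σ_{k=1}^{d} (−q)^{k} m_k), where m_d := m_0. -/
/-!
Put `x = -q`. Since `⟨m, m_j⟩` only involves `m (j - 1)`, `m j` and `m (j + 1)`, a vector `m` lies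
in the radical exactly when its coordinates `m 1, …, m d` (with `m d = m 0`), prolonged by
`a 0 = z * m 0` and `a (d + 1) = z⁻¹ * m 1`, satisfy the constant-coefficient recurrence
`a (k + 2) = (x + x⁻¹) * a (k + 1) - a k` for `0 ≤ k < d` (`rad_iff_recurrence`).

The characteristic roots `x` and `x⁻¹` are distinct, so `a k = α * x ^ k + β * x⁻¹ ^ k`, and the
boundary conditions `a 0 = z * a d`, `a 1 = z * a (d + 1)` decouple into
`α * (1 - z * x ^ d) = 0` and `β * (1 - z * x⁻¹ ^ d) = 0` (`recurrence_solution`). Hence a nonzero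
solution requires `z = x ^ (∓ d)`. As `q` is transcendental, `x ^ d ≠ x ^ (-d)`, so at most one of
`α`, `β` survives, which gives the lines spanned by `n_-` and `n_+`.
-/

/-! Hecke algebras of finite and (extended) affine type A, and evaluation maps. -/

set_option synthInstance.maxHeartbeats 1000000
set_option maxHeartbeats 2000000

noncomputable section

open scoped Classical

namespace PaperEval

/-- The values of the Graham–Lehrer bilinear form on basis vectors. -/
def glFormC (d : ℕ) (z : kk) (i j : ZMod d) : kk :=
  if i = j then qq + qq⁻¹
  else if i = 0 ∧ j = 1 then z
  else if i = 1 ∧ j = 0 then z⁻¹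
  else if i = j + 1 ∨ j = i + 1 then 1
  else 0

/-- The Graham–Lehrer bilinear form `⟨·,·⟩ : M̂_{z,λ} × M̂_{z⁻¹,λ⁻¹} → k`. -/
def glB (d : ℕ) [NeZero d] (z : kk) (v w : VV d) : kk :=
  ∑ i : ZMod d, ∑ j : ZMod d, v i * w j * glFormC d z i j

/-- A solution of the recurrence with characteristic roots `x`, `x⁻¹` that is quasi-periodic with
multiplier `z` is a combination of geometric sequences, each of them quasi-periodic. -/
lemma recurrence_solution {K : Type*} [Field K] (d : ℕ) (x z : K) (hx : x ≠ 0) (hx2 : x ^ 2 ≠ 1)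
    (a : ℕ → K) (hrec : ∀ k < d, a (k + 2) = (x + x⁻¹) * a (k + 1) - a k)
    (h0 : a 0 = z * a d) (h1 : a 1 = z * a (d + 1)) :
    ∃ α β : K, (∀ k ≤ d + 1, a k = α * x ^ k + β * x⁻¹ ^ k) ∧
      α * (1 - z * x ^ d) = 0 ∧ β * (1 - z * x⁻¹ ^ d) = 0 := by
  have hD : x - x⁻¹ ≠ 0 := by
    intro h
    apply hx2
    field_simp at h
    linear_combination h
  have hxx : x * x⁻¹ = 1 := mul_inv_cancel₀ hx
  -- `α` and `β` solve the linear system given by the values `a 0` and `a 1`.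
  obtain ⟨α, hα⟩ : ∃ α, α * (x - x⁻¹) = a 1 - x⁻¹ * a 0 := ⟨_, div_mul_cancel₀ _ hD⟩
  obtain ⟨β, hβ⟩ : ∃ β, β * (x - x⁻¹) = x * a 0 - a 1 := ⟨_, div_mul_cancel₀ _ hD⟩
  have key : ∀ k ≤ d, a k = α * x ^ k + β * x⁻¹ ^ k ∧
      a (k + 1) = α * x ^ (k + 1) + β * x⁻¹ ^ (k + 1) := by
    intro k
    induction k with
    | zero =>
      intro _
      constructor
      · apply mul_right_cancel₀ hD
        linear_combination -hα - hβ
      · apply mul_right_cancel₀ hD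
        linear_combination -x * hα - x⁻¹ * hβ
    | succ k ih =>
      intro hk
      obtain ⟨e0, e1⟩ := ih (by omega)
      refine ⟨e1, ?_⟩
      rw [hrec k (by omega), e0, e1]
      linear_combination (α * x ^ k + β * x⁻¹ ^ k) * hxx
  refine ⟨α, β, ?_, ?_, ?_⟩
  · intro k hk
    rcases Nat.lt_or_ge d k with h | h
    · obtain rfl : k = d + 1 := by omega
      exact (key d le_rfl).2
    · exact (key k h).1
  · obtain ⟨e0, e1⟩ := key d le_rfl
    apply mul_right_cancel₀ hD
    linear_combination hα + h1 - x⁻¹ * h0 + z * e1 - x⁻¹ * z * e0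
  · obtain ⟨e0, e1⟩ := key d le_rfl
    apply mul_right_cancel₀ hD
    linear_combination hβ + x * h0 - h1 + x * z * e0 - z * e1

lemma neg_qq_ne_zero : -qq ≠ 0 := neg_ne_zero.mpr qq_ne_zero

lemma qq_pow_ne_one {n : ℕ} (hn : n ≠ 0) : qq ^ n ≠ 1 := by
  intro h
  unfold qq at h
  rw [← RatFunc.algebraMap_X, ← map_pow, ← map_one (algebraMap (Polynomial ℂ) (RatFunc ℂ))] at h
  have h2 := congrArg Polynomial.natDegree (RatFunc.algebraMap_injective ℂ h)
  simp at h2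
  exact hn h2

lemma neg_qq_sq_ne_one : (-qq) ^ 2 ≠ 1 := by
  rw [neg_sq]
  exact qq_pow_ne_one two_ne_zero

lemma neg_qq_pow_mul_self_ne_one {d : ℕ} (hd : d ≠ 0) : (-qq) ^ d * (-qq) ^ d ≠ 1 := by
  rw [← mul_pow, neg_mul_neg, ← pow_two, ← pow_mul]
  exact qq_pow_ne_one (by omega)

/-- The coordinates `m 1, …, m d` of `m` (with `m d = m 0`), prolonged to `k = 0` and `k = d + 1`
by quasi-periodicity with multiplier `z`. -/
def quasiSeq (d : ℕ) (z : kk) (m : VV d) (k : ℕ) : kk :=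
  (if k = 0 then z else if k = d + 1 then z⁻¹ else 1) * m (k : ZMod d)

lemma quasiSeq_mid {d : ℕ} (z : kk) (m : VV d) {k : ℕ} (h1 : 1 ≤ k) (h2 : k ≤ d) :
    quasiSeq d z m k = m (k : ZMod d) := by
  rw [quasiSeq, if_neg (by omega), if_neg (by omega), one_mul]

lemma quasiSeq_zero {d : ℕ} (z : kk) (m : VV d) : quasiSeq d z m 0 = z * m 0 := by
  simp [quasiSeq]

lemma quasiSeq_last {d : ℕ} (z : kk) (m : VV d) : quasiSeq d z m (d + 1) = z⁻¹ * m 1 := by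
  simp [quasiSeq]

lemma exists_natCast_eq (d : ℕ) [NeZero d] (j : ZMod d) : ∃ k < d, ((k + 1 : ℕ) : ZMod d) = j := by
  refine ⟨(j - 1).val, ZMod.val_lt _, ?_⟩
  push_cast
  rw [ZMod.natCast_zmod_val]
  ring

lemma natCast_eq_zero_iff_of_lt {d k : ℕ} (hk : k < d) : ((k : ℕ) : ZMod d) = 0 ↔ k = 0 := by
  rw [ZMod.natCast_eq_zero_iff]
  exact ⟨fun h => Nat.eq_zero_of_dvd_of_lt h hk, by rintro rfl; exact dvd_zero _⟩

lemma succ_natCast_eq_zero_iff {d k : ℕ} (hk : k < d) :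
    ((k + 1 : ℕ) : ZMod d) = 0 ↔ k + 1 = d := by
  rw [ZMod.natCast_eq_zero_iff]
  exact ⟨fun h => le_antisymm (by omega) (Nat.le_of_dvd (by omega) h), by rintro rfl; rfl⟩

/-- `⟨m, m_j⟩` written out; for `d ≥ 3` the indices `j - 1`, `j`, `j + 1` are distinct. -/
lemma sum_glFormC (d : ℕ) [NeZero d] (hd : 3 ≤ d) (z : kk) (m : VV d) (j : ZMod d) :
    ∑ i, m i * glFormC d z i j =
      m j * (qq + qq⁻¹) + m (j + 1) * (if j = 0 then z⁻¹ else 1) +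
        m (j - 1) * (if j = 1 then z else 1) := by
  have h1 : (1 : ZMod d) ≠ 0 := by
    have := (natCast_eq_zero_iff_of_lt (d := d) (k := 1) (by omega)).not.mpr (by omega)
    exact_mod_cast this
  have h2 : (1 : ZMod d) + 1 ≠ 0 := by
    have := (natCast_eq_zero_iff_of_lt (d := d) (k := 2) (by omega)).not.mpr (by omega)
    intro h
    apply this
    push_cast
    linear_combination h
  have hC : ∀ i, m i * glFormC d z i j =
      (if i = j then m i * (qq + qq⁻¹) else 0) +
      (if i = j + 1 then m i * (if j = 0 then z⁻¹ else 1) else 0) +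
      (if i = j - 1 then m i * (if j = 1 then z else 1) else 0) := by
    intro i
    have e0 : j = i + 1 ↔ i = j - 1 := by rw [eq_sub_iff_add_eq, eq_comm]
    have n1 : j ≠ j + 1 := by simpa using h1
    have n2 : j ≠ j - 1 := by
      intro h
      apply h1
      linear_combination h
    have n3 : j + 1 ≠ j - 1 := by
      intro h
      apply h2
      linear_combination h
    unfold glFormC
    simp only [e0]
    by_cases c1 : i = j
    · subst c1
      simp [n1, n2]
    by_cases c2 : i = j + 1
    · subst c2
      have : ¬ (j + 1 = 0 ∧ j = 1) := by
        rintro ⟨h, rfl⟩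
        exact h2 h
      have e : (j + 1 = 1 ∧ j = 0) ↔ j = 0 := by simp
      rw [if_neg c1, if_neg this, if_neg c1, if_pos rfl, if_neg n3]
      simp
    by_cases c3 : i = j - 1
    · subst c3
      have e : (j - 1 = 0 ∧ j = 1) ↔ j = 1 := by
        rw [sub_eq_zero]
        tauto
      have : ¬ (j - 1 = 1 ∧ j = 0) := by
        rintro ⟨h, rfl⟩
        apply h2
        linear_combination -h
      simp only [e, this]
      simp [n2.symm, n3.symm]
    · have e1 : ¬ (i = 0 ∧ j = 1) := by
        rintro ⟨rfl, rfl⟩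
        simp at c3
      have e2 : ¬ (i = 1 ∧ j = 0) := by
        rintro ⟨rfl, rfl⟩
        simp at c2
      simp [c1, c2, c3, e1, e2]
  simp only [hC, Finset.sum_add_distrib, Finset.sum_ite_eq', Finset.mem_univ, if_true]

lemma rad_iff_sum (d : ℕ) [NeZero d] (z : kk) (m : VV d) :
    (∀ m' : VV d, glB d z m m' = 0) ↔ ∀ j, ∑ i, m i * glFormC d z i j = 0 := by
  have hB : ∀ w, glB d z m w = ∑ j, w j * ∑ i, m i * glFormC d z i j := by
    intro w
    unfold glB
    rw [Finset.sum_comm]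
    refine Finset.sum_congr rfl fun j _ => ?_
    rw [Finset.mul_sum]
    exact Finset.sum_congr rfl fun i _ => by ring
  constructor
  · intro h j
    have := h (em d j)
    rw [hB] at this
    simpa [em, Pi.single_apply] using this
  · intro h w
    rw [hB]
    simp [h]

lemma rad_iff_recurrence (d : ℕ) [NeZero d] (hd : 3 ≤ d) (z : kk) (m : VV d) :
    (∀ m' : VV d, glB d z m m' = 0) ↔
      ∀ k < d, quasiSeq d z m (k + 2) =
        (-qq + (-qq)⁻¹) * quasiSeq d z m (k + 1) - quasiSeq d z m k := by
  have hk : ∀ k < d, (∑ i, m i * glFormC d z i ((k + 1 : ℕ) : ZMod d) =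
      (qq + qq⁻¹) * quasiSeq d z m (k + 1) + quasiSeq d z m (k + 2) + quasiSeq d z m k) := by
    intro k hk
    have e0 : ((k + 1 : ℕ) : ZMod d) = 0 ↔ k + 2 = d + 1 := by
      rw [succ_natCast_eq_zero_iff hk]
      omega
    have e1 : ((k + 1 : ℕ) : ZMod d) = 1 ↔ k = 0 := by
      rw [← natCast_eq_zero_iff_of_lt hk]
      simp
    have s1 : ((k + 1 : ℕ) : ZMod d) + 1 = ((k + 2 : ℕ) : ZMod d) := by
      push_cast
      ring
    have s2 : ((k + 1 : ℕ) : ZMod d) - 1 = (k : ZMod d) := by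
      push_cast
      ring
    rw [sum_glFormC d hd, quasiSeq_mid z m (by omega) (by omega), s1, s2]
    have t1 : quasiSeq d z m (k + 2) =
        (if k + 2 = d + 1 then z⁻¹ else 1) * m ((k + 2 : ℕ) : ZMod d) := by
      rw [quasiSeq, if_neg (by omega)]
    have t2 : quasiSeq d z m k = (if k = 0 then z else 1) * m (k : ZMod d) := by
      rw [quasiSeq, if_neg (show ¬ k = d + 1 by omega)]
    rw [t1, t2]
    simp only [e0, e1]
    ring
  rw [rad_iff_sum]
  have hinv : (-qq)⁻¹ = -qq⁻¹ := inv_neg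
  constructor
  · intro h k hkd
    have := h ((k + 1 : ℕ) : ZMod d)
    rw [hk k hkd] at this
    rw [hinv]
    linear_combination this
  · intro h j
    obtain ⟨k, hkd, rfl⟩ := exists_natCast_eq d j
    rw [hk k hkd, h k hkd, hinv]
    ring

/-- The vector `∑ k ∈ [1, d], x ^ k • m_k`: it is `n_-` for `x = -q` and `n_+` for `x = (-q)⁻¹`. -/
def geomVec (d : ℕ) (x : kk) : VV d := ∑ k ∈ Finset.Icc 1 d, x ^ k • em d (k : ZMod d)

lemma nMinus_eq (d : ℕ) : nMinus d = geomVec d (-qq) := rfl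

lemma nPlus_eq (d : ℕ) : nPlus d = geomVec d (-qq)⁻¹ := by
  simp only [nPlus, geomVec, inv_pow]

lemma geomVec_apply (d : ℕ) (x : kk) {k : ℕ} (hk : k < d) :
    geomVec d x ((k + 1 : ℕ) : ZMod d) = x ^ (k + 1) := by
  unfold geomVec
  rw [Finset.sum_apply, Finset.sum_eq_single (k + 1)]
  · simp [em]
  · intro b hb hne
    rw [Finset.mem_Icc] at hb
    have : ((k + 1 : ℕ) : ZMod d) ≠ (b : ZMod d) := by
      intro h
      rw [ZMod.natCast_eq_natCast_iff] at h
      -- Both `k + 1` and `b` lie in `[1, d]`, a full system of residues.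
      obtain ⟨c, rfl⟩ : ∃ c, b = c + 1 := ⟨b - 1, by omega⟩
      have h' := Nat.ModEq.add_right_cancel' 1 h
      have := Nat.ModEq.eq_of_lt_of_lt h' hk (by omega)
      omega
    rw [Pi.smul_apply, em, Pi.single_eq_of_ne this, smul_zero]
  · intro h
    exact absurd (Finset.mem_Icc.mpr ⟨by omega, by omega⟩) h

lemma geomVec_ne_zero {d : ℕ} (hd : 3 ≤ d) {x : kk} (hx : x ≠ 0) : geomVec d x ≠ 0 := by
  intro h
  have := geomVec_apply d x (k := 0) (by omega)
  rw [h] at this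
  simp at this
  exact hx this.symm

lemma geomVec_mem_rad (d : ℕ) [NeZero d] (hd : 3 ≤ d) {x z : kk} (hx : x ≠ 0)
    (hxq : -qq + (-qq)⁻¹ = x + x⁻¹) (hz : z * x ^ d = 1) (m' : VV d) :
    glB d z (geomVec d x) m' = 0 := by
  have hseq : ∀ k ≤ d + 1, quasiSeq d z (geomVec d x) k = x ^ k := by
    intro k hk
    have hz0 : z ≠ 0 := left_ne_zero_of_mul_eq_one hz
    rcases Nat.eq_zero_or_pos k with rfl | hpos
    · have e : (0 : ZMod d) = ((d - 1 + 1 : ℕ) : ZMod d) := by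
        rw [Nat.sub_add_cancel (by omega), ZMod.natCast_self]
      rw [quasiSeq_zero, e, geomVec_apply d x (by omega), Nat.sub_add_cancel (by omega), hz,
        pow_zero]
    rcases Nat.lt_or_ge d k with h | h
    · obtain rfl : k = d + 1 := by omega
      have := geomVec_apply d x (k := 0) (by omega)
      simp only [zero_add, Nat.cast_one, pow_one] at this
      rw [quasiSeq_last, this, inv_mul_eq_iff_eq_mul₀ hz0]
      linear_combination -x * hz
    · obtain ⟨c, rfl⟩ : ∃ c, k = c + 1 := ⟨k - 1, by omega⟩
      rw [quasiSeq_mid z _ hpos h, geomVec_apply d x (by omega)]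
  refine (rad_iff_recurrence d hd z _).mpr ?_ m'
  intro k hk
  rw [hseq _ (by omega), hseq _ (by omega), hseq _ (by omega), hxq]
  linear_combination (-x ^ k) * mul_inv_cancel₀ hx

lemma rad_decomposition (d : ℕ) [NeZero d] (hd : 3 ≤ d) {z : kk} (hz : z ≠ 0) (m : VV d)
    (hm : ∀ m' : VV d, glB d z m m' = 0) :
    ∃ α β : kk, m = α • nMinus d + β • nPlus d ∧
      α * (1 - z * (-qq) ^ d) = 0 ∧ β * (1 - z * (-qq)⁻¹ ^ d) = 0 := by
  rw [rad_iff_recurrence d hd] at hm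
  obtain ⟨α, β, h, hα, hβ⟩ := recurrence_solution d (-qq) z neg_qq_ne_zero neg_qq_sq_ne_one
    (quasiSeq d z m) hm
    (by rw [quasiSeq_zero, quasiSeq_mid z m (by omega) le_rfl, ZMod.natCast_self])
    (by
      rw [quasiSeq_last, quasiSeq_mid z m le_rfl (by omega), mul_inv_cancel_left₀ hz,
        Nat.cast_one])
  refine ⟨α, β, ?_, hα, hβ⟩
  funext j
  obtain ⟨k, hk, rfl⟩ := exists_natCast_eq d j
  rw [← quasiSeq_mid z m (by omega) (by omega), h _ (by omega), Pi.add_apply, Pi.smul_apply,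
    Pi.smul_apply, nMinus_eq, nPlus_eq, geomVec_apply d _ hk, geomVec_apply d _ hk, smul_eq_mul,
    smul_eq_mul]

lemma glB_smul_left (d : ℕ) [NeZero d] (z c : kk) (v w : VV d) :
    glB d z (c • v) w = c * glB d z v w := by
  simp only [glB, Finset.mul_sum, Pi.smul_apply, smul_eq_mul, mul_assoc]

/-- the radical of the Graham–Lehrer form on `M̂_{z,λ}` is zero unless
`z = (-q)^{± d}`, in which case it is the line spanned by `n_±`. -/
theorem statement8 (d : ℕ) [NeZero d] (hd : 3 ≤ d) (z : kkˣ) :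
    ((z : kk) ≠ (-qq) ^ d → (z : kk) ≠ ((-qq) ^ d)⁻¹ →
      ∀ m : VV d, (∀ m' : VV d, glB d (z : kk) m m' = 0) → m = 0) ∧
    ((z : kk) = (-qq) ^ d →
      ({m : VV d | ∀ m' : VV d, glB d (z : kk) m m' = 0} =
          (Submodule.span kk {nPlus d} : Submodule kk (VV d)) ∧ nPlus d ≠ 0)) ∧
    ((z : kk) = ((-qq) ^ d)⁻¹ →
      ({m : VV d | ∀ m' : VV d, glB d (z : kk) m m' = 0} =
          (Submodule.span kk {nMinus d} : Submodule kk (VV d)) ∧ nMinus d ≠ 0)) := by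
  have hx := neg_qq_ne_zero
  have hxd : (-qq) ^ d ≠ 0 := pow_ne_zero d hx
  have hne := neg_qq_pow_mul_self_ne_one (d := d) (by omega)
  refine ⟨?_, ?_, ?_⟩
  · intro hz1 hz2 m hm
    obtain ⟨α, β, rfl, hα, hβ⟩ := rad_decomposition d hd z.ne_zero m hm
    have hα0 : α = 0 := (mul_eq_zero.mp hα).resolve_right fun h =>
      hz2 (eq_inv_of_mul_eq_one_left (sub_eq_zero.mp h).symm)
    have hβ0 : β = 0 := (mul_eq_zero.mp hβ).resolve_right fun h => hz1 (by
      rw [inv_pow, sub_eq_zero, eq_mul_inv_iff_mul_eq₀ hxd, one_mul] at h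
      exact h.symm)
    rw [hα0, hβ0, zero_smul, zero_smul, add_zero]
  · intro hz
    refine ⟨?_, nPlus_eq d ▸ geomVec_ne_zero hd (inv_ne_zero hx)⟩
    ext m
    rw [Set.mem_ofPred_eq, SetLike.mem_coe, Submodule.mem_span_singleton]
    constructor
    · intro hm
      obtain ⟨α, β, rfl, hα, -⟩ := rad_decomposition d hd z.ne_zero m hm
      have hα0 : α = 0 := (mul_eq_zero.mp hα).resolve_right fun h =>
        hne (by rw [hz] at h; exact (sub_eq_zero.mp h).symm)
      exact ⟨β, by rw [hα0, zero_smul, zero_add]⟩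
    · rintro ⟨c, rfl⟩ m'
      rw [glB_smul_left, nPlus_eq, geomVec_mem_rad d hd (inv_ne_zero hx)
        (by rw [inv_inv, add_comm]) (by rw [hz, inv_pow, mul_inv_cancel₀ hxd]), mul_zero]
  · intro hz
    refine ⟨?_, nMinus_eq d ▸ geomVec_ne_zero hd hx⟩
    ext m
    rw [Set.mem_ofPred_eq, SetLike.mem_coe, Submodule.mem_span_singleton]
    constructor
    · intro hm
      obtain ⟨α, β, rfl, -, hβ⟩ := rad_decomposition d hd z.ne_zero m hm
      have hβ0 : β = 0 := (mul_eq_zero.mp hβ).resolve_right fun h => hne (by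
        rw [hz, inv_pow, ← mul_inv, sub_eq_zero, eq_comm, inv_eq_one] at h
        exact h)
      exact ⟨α, by rw [hβ0, zero_smul, add_zero]⟩
    · rintro ⟨c, rfl⟩ m'
      rw [glB_smul_left, nMinus_eq, geomVec_mem_rad d hd hx rfl
        (by rw [hz, inv_mul_cancel₀ hxd]), mul_zero]

end PaperEval
end
end

section
/- For every λ ∈ k^×, in the module M̂_{(−q)^{±d},λ} one has ρ n_± = λ(−q)^{±1} n_± and (T_i + q) n_± = 0 for every i ∈ {0, …, d−1}. -/
/-! Both halves are instances of one computation.  Let `x ≠ 0` satisfy `x + x⁻¹ = -(q + q⁻¹)`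
(so `x = -q` or `x = (-q)⁻¹`), let `z = x ^ d`, and put `n = ∑_{k=1}^d x^{-k} m_k`.  Writing
`n = ∑_j c_j m_j` over `j ∈ ℤ/d`, the coefficients satisfy `x c_{j+1} = z^{δ_{j,0}} c_j`: the
twist by `z` compensates for the jump from `x^{-d}` to `x^{-1}` at `j = 0` (`glCoeff_succ`).
This recurrence gives `ρ n = λ x n` at once.  Since `d ≥ 3`, the indices `i - 1, i, i + 1` are
distinct, and by the recurrence `b_i n = (x + (q + q⁻¹) + x⁻¹) c_i m_i = 0`. -/

/-! Hecke algebras of finite and (extended) affine type A, and evaluation maps. -/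

set_option synthInstance.maxHeartbeats 1000000
set_option maxHeartbeats 2000000

noncomputable section

open scoped Classical

namespace PaperEval

/-- The coefficient of `m_j` in `∑_{k=1}^d x^{-k} m_k`: it is `x^{-k}` for the representative
`k ∈ {1, …, d}` of `j`, so the class of `0` is represented by `d`. -/
def glCoeff (d : ℕ) (x : kk) (j : ZMod d) : kk :=
  (x ^ (if j = 0 then d else j.val))⁻¹

lemma glCoeff_natCast (d : ℕ) (x : kk) (k : ℕ) (h1 : 1 ≤ k) (h2 : k ≤ d) :
    glCoeff d x (k : ZMod d) = (x ^ k)⁻¹ := by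
  unfold glCoeff
  rcases h2.eq_or_lt with rfl | h
  · simp
  · have : (k : ZMod d) ≠ 0 := by
      rw [Ne, ZMod.natCast_eq_zero_iff]
      exact Nat.not_dvd_of_pos_of_lt h1 h
    rw [if_neg this, ZMod.val_cast_of_lt h]

/-- Representatives are taken in `{1, …, d}`, matching the summation range of `n_±`. -/
lemma exists_natCast_rep (d : ℕ) [NeZero d] (j : ZMod d) :
    ∃ k : ℕ, 1 ≤ k ∧ k ≤ d ∧ (k : ZMod d) = j := by
  by_cases h : j = 0
  · exact ⟨d, Nat.one_le_iff_ne_zero.2 (NeZero.ne d), le_rfl, by simp [h]⟩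
  · exact ⟨j.val, Nat.one_le_iff_ne_zero.2 (by simpa using h), (ZMod.val_lt j).le, by simp⟩

/-- The coefficients are geometric around the cycle `ℤ/d`, up to the twist `z = x ^ d` at `0`. -/
lemma glCoeff_succ (d : ℕ) [NeZero d] (x : kk) (hx : x ≠ 0) (j : ZMod d) :
    x * glCoeff d x (j + 1) = (if j = 0 then x ^ d else 1) * glCoeff d x j := by
  obtain ⟨k, h1, h2, rfl⟩ := exists_natCast_rep d j
  rcases h2.eq_or_lt with rfl | h
  · have e : ((k : ZMod k) + 1) = ((1 : ℕ) : ZMod k) := by simp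
    rw [e, glCoeff_natCast k x 1 le_rfl h1, glCoeff_natCast k x k h1 le_rfl]
    simp [hx]
  · have hk : (k : ZMod d) ≠ 0 := by
      rw [Ne, ZMod.natCast_eq_zero_iff]
      exact Nat.not_dvd_of_pos_of_lt h1 h
    have e : ((k : ZMod d) + 1) = ((k + 1 : ℕ) : ZMod d) := by simp
    rw [e, glCoeff_natCast d x (k + 1) (by omega) h, glCoeff_natCast d x k h1 h2, if_neg hk]
    field_simp
    ring

lemma sum_Icc_eq (d : ℕ) [NeZero d] (x : kk) :
    ∑ k ∈ Finset.Icc 1 d, (x ^ k)⁻¹ • em d (k : ZMod d) = ∑ j, glCoeff d x j • em d j := by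
  refine Finset.sum_bij (fun k _ => (k : ZMod d)) (fun _ _ => Finset.mem_univ _) ?_ ?_ ?_
  · intro a ha b hb hab
    rw [Finset.mem_Icc] at ha hb
    have h := (ZMod.natCast_eq_natCast_iff a b d).1 hab
    have h' : (a - 1) ≡ (b - 1) [MOD d] := by
      apply Nat.ModEq.add_right_cancel' 1
      rwa [Nat.sub_add_cancel ha.1, Nat.sub_add_cancel hb.1]
    have := Nat.ModEq.eq_of_lt_of_lt h' (by omega) (by omega)
    omega
  · intro j _
    obtain ⟨k, h1, h2, h⟩ := exists_natCast_rep d j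
    exact ⟨k, Finset.mem_Icc.2 ⟨h1, h2⟩, h⟩
  · intro k hk
    rw [Finset.mem_Icc] at hk
    rw [glCoeff_natCast d x k hk.1 hk.2]

/-- The vector `n` is an eigenvector of `ρ`, by `glCoeff_succ` applied term by term. -/
lemma rho_eigen (d : ℕ) [NeZero d] (x l : kk) (hx : x ≠ 0)
    (β : ExtHecke d →ₐ[kk] Module.End kk (VV d)) (hβ : IsGL d (x ^ d) l β) :
    β (eR d) (∑ j, glCoeff d x j • em d j) = (l * x) • ∑ j, glCoeff d x j • em d j := by
  rw [map_sum, Finset.smul_sum]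
  -- Reindex the right-hand sum by `j ↦ j + 1` to match `ρ m_j ∈ k m_{j+1}`.
  rw [← Equiv.sum_comp (Equiv.addRight (1 : ZMod d)) (fun j => (l * x) • glCoeff d x j • em d j)]
  refine Finset.sum_congr rfl fun j _ => ?_
  have h := glCoeff_succ d x hx j
  rw [map_smul, hβ.2 j, Equiv.coe_addRight, smul_smul, smul_smul, mul_assoc l, h]
  congr 1
  split_ifs <;> ring

/-- Only `m_{i-1}`, `m_i`, `m_{i+1}` contribute to `b_i n`, with total coefficient
`(x + (q + q⁻¹) + x⁻¹) c_i = 0`.  The bound `3 ≤ d` makes these three indices distinct. -/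
lemma b_kill (d : ℕ) (hd : 3 ≤ d) [NeZero d] (x l : kk) (hx : x ≠ 0)
    (hq : x + x⁻¹ = -(qq + qq⁻¹))
    (β : ExtHecke d →ₐ[kk] Module.End kk (VV d)) (hβ : IsGL d (x ^ d) l β) (i : ZMod d) :
    β (eT d i + algebraMap kk (ExtHecke d) qq) (∑ j, glCoeff d x j • em d j) = 0 := by
  have h1 : (1 : ZMod d) ≠ 0 := by
    have : ((1 : ℕ) : ZMod d) ≠ 0 := by
      rw [Ne, ZMod.natCast_eq_zero_iff]; exact Nat.not_dvd_of_pos_of_lt (by omega) (by omega)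
    simpa using this
  have h2 : (2 : ZMod d) ≠ 0 := by
    have : ((2 : ℕ) : ZMod d) ≠ 0 := by
      rw [Ne, ZMod.natCast_eq_zero_iff]; exact Nat.not_dvd_of_pos_of_lt (by omega) (by omega)
    simpa using this
  have e1 : i + 1 ≠ i := by simpa using h1
  have e2 : i - 1 ≠ i := by simpa using h1
  have e3 : i - 1 ≠ i + 1 := fun h => h2 (by linear_combination -h)
  rw [map_sum]
  simp only [map_smul, hβ.1]
  have hs : ∑ j, glCoeff d x j • GLact d (x ^ d) i j =
      ∑ j ∈ ({i - 1, i, i + 1} : Finset (ZMod d)), glCoeff d x j • GLact d (x ^ d) i j := by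
    symm
    apply Finset.sum_subset (Finset.subset_univ _)
    intro j _ hj
    simp only [Finset.mem_insert, Finset.mem_singleton, not_or] at hj
    obtain ⟨ha, hb, hc⟩ := hj
    have n1 : ¬(i = 1 ∧ j = 0) := fun h => ha (by rw [h.1, h.2]; ring)
    have n2 : ¬(i = 0 ∧ j = 1) := fun h => hc (by rw [h.1, h.2]; ring)
    rw [GLact, if_neg hb, if_neg n1, if_neg n2, if_neg (by tauto), smul_zero]
  rw [hs, Finset.sum_insert (by simp [e2, e3]), Finset.sum_insert (by simpa using e1.symm),
    Finset.sum_singleton]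
  have g0 : GLact d (x ^ d) i i = (qq + qq⁻¹) • em d i := by simp [GLact]
  have gp : GLact d (x ^ d) i (i + 1) = (if i = 0 then (x ^ d)⁻¹ else 1) • em d i := by
    -- The case `i = 1`, `i + 1 = 0` of the first exceptional pair would force `2 = 0` in `ℤ/d`.
    have n1 : ¬(i = 1 ∧ i + 1 = 0) := fun h => h2 (by linear_combination h.2 - h.1)
    rw [GLact, if_neg e1, if_neg n1]
    by_cases h : i = 0
    · subst h; simp
    · simp [h]
  have gm : GLact d (x ^ d) i (i - 1) = (if i - 1 = 0 then x ^ d else 1) • em d i := by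
    rw [GLact, if_neg e2]
    by_cases h : i = 1
    · subst h; simp
    · have n2 : ¬(i = 0 ∧ i - 1 = 1) := fun h => h2 (by linear_combination h.1 - h.2)
      have h' : i - 1 ≠ 0 := sub_ne_zero.2 h
      rw [if_neg (fun h'' => h h''.1), if_neg n2, if_neg h']
      simp
  have hz : x ^ d ≠ 0 := pow_ne_zero d hx
  have cp : glCoeff d x (i + 1) * (if i = 0 then (x ^ d)⁻¹ else 1) = x⁻¹ * glCoeff d x i := by
    have h := glCoeff_succ d x hx i
    apply mul_left_cancel₀ hx
    rw [← mul_assoc, h]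
    split_ifs <;> field_simp
  have cm : glCoeff d x (i - 1) * (if i - 1 = 0 then x ^ d else 1) = x * glCoeff d x i := by
    have h := glCoeff_succ d x hx (i - 1)
    rw [sub_add_cancel] at h
    rw [h, mul_comm]
  rw [g0, gp, gm, smul_smul, smul_smul, smul_smul, cp, cm, ← add_smul, ← add_smul]
  have : x * glCoeff d x i + (glCoeff d x i * (qq + qq⁻¹)) + x⁻¹ * glCoeff d x i = 0 := by
    linear_combination glCoeff d x i * hq
  rw [← add_assoc, this, zero_smul]

/-- in `M̂_{(-q)^{± d}, λ}` one has `ρ n_± = λ (-q)^{± 1} n_±`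
and `(T_i + q) n_± = 0` for every `i`. -/
theorem statement9 (d : ℕ) (hd : 3 ≤ d) (l : kkˣ)
    (β β' : ExtHecke d →ₐ[kk] Module.End kk (VV d))
    (hβ : IsGL d ((-qq) ^ d) (l : kk) β) (hβ' : IsGL d (((-qq) ^ d)⁻¹) (l : kk) β') :
    β (eR d) (nPlus d) = ((l : kk) * (-qq)) • nPlus d ∧
    (∀ i : ZMod d, β (eT d i + algebraMap kk (ExtHecke d) qq) (nPlus d) = 0) ∧
    β' (eR d) (nMinus d) = ((l : kk) * (-qq)⁻¹) • nMinus d ∧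
    (∀ i : ZMod d, β' (eT d i + algebraMap kk (ExtHecke d) qq) (nMinus d) = 0) := by
  have : NeZero d := ⟨by omega⟩
  have hq0 : (-qq : kk) ≠ 0 := neg_ne_zero.2 RatFunc.X_ne_zero
  have hp : nPlus d = ∑ j, glCoeff d (-qq) j • em d j := sum_Icc_eq d _
  have hm : nMinus d = ∑ j, glCoeff d (-qq)⁻¹ j • em d j := by
    rw [← sum_Icc_eq d, nMinus]
    simp only [inv_pow, inv_inv]
  rw [← inv_pow] at hβ'
  have hinv : ((-qq : kk)⁻¹) = -qq⁻¹ := inv_neg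
  rw [hp, hm]
  refine ⟨rho_eigen d _ _ hq0 β hβ, b_kill d hd _ _ hq0 ?_ β hβ,
    rho_eigen d _ _ (inv_ne_zero hq0) β' hβ', b_kill d hd _ _ (inv_ne_zero hq0) ?_ β' hβ'⟩
  · rw [hinv]; ring
  · rw [inv_inv, hinv]; ring

end PaperEval
end
end

section
/- For every a ∈ k^× and every j ∈ {1, …, d−1}, in the H_d-module M_d one has: a T_1^{-1} ⋯ T_{d−1}^{-1} · m_j = a(−q)^{2−d} m_{j+1} if 1 ≤ j ≤ d−2, and = a q Σ_{k=1}^{d−1} (−q)^{1−k} m_k if j = d−1; and a T_1 ⋯ T_{d−1} · m_j = a(−q)^{d−2} m_{j+1} if 1 ≤ j ≤ d−2, and = a q^{-1} Σ_{k=1}^{d−1} (−q)^{k−1} m_k if j = d−1. In particular, these formulas give the action of ρ on M_d^{ev_a} and on M_d^{ev'_a}, respectively. -/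
/-! Both products are instances of one computation. With `b_i = T_i + q` one has
`T_i = b_i - q` and `T_i⁻¹ = b_i - q⁻¹`, so take a nonzero scalar `c` and operators
`S_i = b_i - c`, where `b_i m_i = (c + c⁻¹) m_i`; the cases `c = q` and `c = q⁻¹` are the two
products. Writing `Q_n = ∑_{k=1}^{n} (-c)^{k-1} m_k`, an induction on `n` determines
`P_n = S_1 ⋯ S_n` on every basis vector (`prod_action`):
`P_n m_j = (-c)^{n-1} m_{j+1}` for `j < n`, `P_n m_n = c⁻¹ Q_n`, `P_n m_{n+1} = Q_{n+1}`, and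
`P_n m_j = (-c)^n m_j` for `j > n + 1`. The only cancellation occurs at `j = n - 1`:
`P_n m_{n-1} = P_{n-1} (m_n - c m_{n-1}) = Q_n - Q_{n-1} = (-c)^{n-1} m_n`. The theorem is the
case `n = d - 1`. -/

/-! Hecke algebras of finite and (extended) affine type A, and evaluation maps. -/

set_option synthInstance.maxHeartbeats 1000000
set_option maxHeartbeats 2000000

noncomputable section

open scoped Classical

namespace PaperEval

/-- The underlying `k`-vector space of the simple `H_d`-module `M_d`,
with basis `m_1, …, m_{d-1}`. -/
abbrev WW (d : ℕ) : Type := {i : ℕ // 1 ≤ i ∧ i < d} → kk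

/-- The basis vector `m_i` of `M_d` (zero if `i` is out of range). -/
def wm (d : ℕ) (i : ℕ) : WW d := fun x => if (x : ℕ) = i then 1 else 0

/-- The value of `b_i m_j` in `M_d`: `(q+q⁻¹) m_i` if `j = i`, `m_i` if `j = i ± 1`,
and `0` otherwise. -/
def Mact (d : ℕ) (i j : ℕ) : WW d :=
  if j = i then (qq + qq⁻¹) • wm d i
  else if j = i + 1 ∨ i = j + 1 then wm d i
  else 0

/-- The `H_d`-module structure `M_d`, encoded by the corresponding algebra map
into `End_k(WW d)`: the generators `b_i = T_i + q` act on the basis by `Mact`. -/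
def IsMd (d : ℕ) (α : Hecke d →ₐ[kk] Module.End kk (WW d)) : Prop :=
  ∀ i j : ℕ, 1 ≤ i → i < d → 1 ≤ j → j < d →
    α (hT d i + algebraMap kk (Hecke d) qq) (wm d j) = Mact d i j

/-- The partial sum `Q_n = ∑_{k=1}^{n} (-c)^{k-1} m_k`, indexed by `k - 1 ∈ {0, …, n - 1}`. -/
def geomSum {V : Type} [AddCommGroup V] [Module kk V] (c : kk) (m : ℕ → V) (n : ℕ) : V :=
  ∑ k ∈ Finset.range n, (-c) ^ k • m (k + 1)

lemma geomSum_succ {V : Type} [AddCommGroup V] [Module kk V] (c : kk) (m : ℕ → V) (n : ℕ) :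
    geomSum c m (n + 1) = geomSum c m n + (-c) ^ n • m (n + 1) :=
  Finset.sum_range_succ _ _

/-- The action of `S_1 ⋯ S_n` on all of `m_1, …, m_{d-1}`, for operators with
`S_i m_i = c⁻¹ m_i`, `S_i m_{i ± 1} = m_i - c m_{i ± 1}` and `S_i m_j = -c m_j` otherwise.
All four cases are needed together for the induction on `n`. -/
lemma prod_action {V : Type} [AddCommGroup V] [Module kk V] (d : ℕ) (c : kk) (hc : c ≠ 0)
    (m : ℕ → V) (S : ℕ → Module.End kk V)
    (h_diag : ∀ i, 1 ≤ i → i < d → S i (m i) = c⁻¹ • m i)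
    (h_adj : ∀ i j, 1 ≤ i → i < d → 1 ≤ j → j < d → (j = i + 1 ∨ i = j + 1) →
      S i (m j) = m i - c • m j)
    (h_far : ∀ i j, 1 ≤ i → i < d → 1 ≤ j → j < d → j ≠ i → ¬ (j = i + 1 ∨ i = j + 1) →
      S i (m j) = (-c) • m j)
    (n : ℕ) (hn : n < d) (j : ℕ) (h_pos : 1 ≤ j) (hj : j < d) :
    (j < n → ((List.range n).map fun i => S (i + 1)).prod (m j) = (-c) ^ (n - 1) • m (j + 1)) ∧
    (j = n → ((List.range n).map fun i => S (i + 1)).prod (m j) = c⁻¹ • geomSum c m n) ∧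
    (j = n + 1 → ((List.range n).map fun i => S (i + 1)).prod (m j) = geomSum c m (n + 1)) ∧
    (n + 1 < j → ((List.range n).map fun i => S (i + 1)).prod (m j) = (-c) ^ n • m j) := by
  induction n generalizing j with
  | zero =>
    refine ⟨by omega, by omega, ?_, ?_⟩
    · rintro rfl
      simp [geomSum]
    · intro _
      simp
  | succ n ih =>
    have key : ∀ v, ((List.range (n + 1)).map fun i => S (i + 1)).prod v =
        ((List.range n).map fun i => S (i + 1)).prod (S (n + 1) v) := by
      intro v
      simp [List.range_succ]
    have ih' := ih (by omega)
    simp only [key]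
    refine ⟨?_, ?_, ?_, ?_⟩
    · intro hlt
      obtain rfl | hne := eq_or_ne j n
      · rw [h_adj (j + 1) j (by omega) hn h_pos hj (Or.inr rfl), map_sub, map_smul,
          (ih' (j + 1) (by omega) hn).2.2.1 rfl, (ih' j h_pos hj).2.1 rfl, smul_smul,
          mul_inv_cancel₀ hc, one_smul, geomSum_succ, add_sub_cancel_left, Nat.add_sub_cancel]
      · rw [h_far (n + 1) j (by omega) hn h_pos hj (by omega) (by omega), map_smul,
          (ih' j h_pos hj).1 (by omega), smul_smul, ← pow_succ']
        congr 2
        omega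
    · rintro rfl
      rw [h_diag _ h_pos hj, map_smul, (ih' (n + 1) h_pos hj).2.2.1 rfl]
    · rintro rfl
      rw [h_adj (n + 1) (n + 1 + 1) (by omega) hn h_pos hj (Or.inl rfl), map_sub, map_smul,
        (ih' (n + 1) (by omega) hn).2.2.1 rfl, (ih' (n + 1 + 1) h_pos hj).2.2.2 (by omega),
        geomSum_succ c m (n + 1), smul_smul, pow_succ', neg_mul, neg_smul, sub_eq_add_neg]
    · intro hlt
      rw [h_far (n + 1) j (by omega) hn h_pos hj (by omega) (by omega), map_smul,
        (ih' j h_pos hj).2.2.2 (by omega), smul_smul, ← pow_succ']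

/-- `prod_action` with `n = d - 1` for `M_d`: the hypothesis `ht` says `t_i = b_i - c`. -/
lemma Md_action (d : ℕ) (hd : 3 ≤ d) (α : Hecke d →ₐ[kk] Module.End kk (WW d)) (hα : IsMd d α)
    (c : kk) (hc : c ≠ 0) (h_sum : c + c⁻¹ = qq + qq⁻¹) (t : ℕ → Hecke d)
    (ht : ∀ i, t i = hT d i + algebraMap kk (Hecke d) qq - algebraMap kk (Hecke d) c) :
    (∀ j : ℕ, 1 ≤ j → j ≤ d - 2 →
      α ((List.range (d - 1)).map fun i => t (i + 1)).prod (wm d j) =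
        (-c) ^ (d - 2) • wm d (j + 1)) ∧
    α ((List.range (d - 1)).map fun i => t (i + 1)).prod (wm d (d - 1)) =
      c⁻¹ • geomSum c (wm d) (d - 1) := by
  have h_act : ∀ i j, 1 ≤ i → i < d → 1 ≤ j → j < d →
      α (t i) (wm d j) = Mact d i j - c • wm d j := by
    intro i j h1 h2 h3 h4
    rw [ht, map_sub, LinearMap.sub_apply, hα i j h1 h2 h3 h4, AlgHom.commutes,
      Module.algebraMap_end_apply]
  have h_prod : α ((List.range (d - 1)).map fun i => t (i + 1)).prod =
      ((List.range (d - 1)).map fun i => α (t (i + 1))).prod := by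
    rw [map_list_prod, List.map_map]
    rfl
  have main := prod_action d c hc (wm d) (fun i => α (t i))
    (by
      intro i h1 h2
      rw [h_act i i h1 h2 h1 h2, Mact, if_pos rfl, ← sub_smul, ← h_sum, add_sub_cancel_left])
    (by
      intro i j h1 h2 h3 h4 h5
      rw [h_act i j h1 h2 h3 h4, Mact, if_neg (by omega), if_pos h5])
    (by
      intro i j h1 h2 h3 h4 h5 h6
      rw [h_act i j h1 h2 h3 h4, Mact, if_neg h5, if_neg h6, zero_sub, neg_smul])
    (d - 1) (by omega)
  rw [h_prod]
  refine ⟨fun j h1 h2 => ?_, (main (d - 1) (by omega) (by omega)).2.1 rfl⟩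
  exact (main j h1 (by omega)).1 (by omega)

lemma geomSum_eq_Icc (d : ℕ) (c : kk) (n : ℕ) :
    geomSum c (wm d) n = ∑ k ∈ Finset.Icc 1 n, (-c) ^ ((k : ℤ) - 1) • wm d k := by
  induction n with
  | zero => simp [geomSum]
  | succ n ih =>
    rw [geomSum_succ, Finset.sum_Icc_succ_top (by omega), ih]
    simp

/-- the action of `ev_a(ρ) = a T_1⁻¹ ⋯ T_{d-1}⁻¹` and of
`ev'_a(ρ) = a T_1 ⋯ T_{d-1}` on the basis of `M_d`. -/
theorem statement11 (d : ℕ) (hd : 3 ≤ d) (a : kkˣ)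
    (α : Hecke d →ₐ[kk] Module.End kk (WW d)) (hα : IsMd d α) :
    (∀ j : ℕ, 1 ≤ j → j ≤ d - 2 →
      (a : kk) • α (hInvAsc d) (wm d j) = ((a : kk) * (-qq) ^ (2 - (d : ℤ))) • wm d (j + 1)) ∧
    ((a : kk) • α (hInvAsc d) (wm d (d - 1)) =
      ((a : kk) * qq) • ∑ k ∈ Finset.Icc 1 (d - 1), ((-qq) ^ (1 - (k : ℤ))) • wm d k) ∧
    (∀ j : ℕ, 1 ≤ j → j ≤ d - 2 →
      (a : kk) • α (hAsc d) (wm d j) = ((a : kk) * (-qq) ^ ((d : ℤ) - 2)) • wm d (j + 1)) ∧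
    ((a : kk) • α (hAsc d) (wm d (d - 1)) =
      ((a : kk) * qq⁻¹) • ∑ k ∈ Finset.Icc 1 (d - 1), ((-qq) ^ ((k : ℤ) - 1)) • wm d k) := by
  have h_inv := Md_action d hd α hα qq⁻¹ (inv_ne_zero qq_ne_zero)
    (by rw [inv_inv, add_comm]) (hTinv d)
    (fun i => by rw [hTinv, map_sub, add_sub_assoc])
  have h_asc := Md_action d hd α hα qq qq_ne_zero rfl (hT d)
    (fun i => by rw [add_sub_cancel_right])
  have h_pow : ∀ z : ℤ, (-qq⁻¹) ^ z = (-qq) ^ (-z) := fun z => by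
    rw [← inv_neg, inv_zpow, zpow_neg]
  have h_cast : ((d - 2 : ℕ) : ℤ) = (d : ℤ) - 2 := by omega
  refine ⟨fun j h1 h2 => ?_, ?_, fun j h1 h2 => ?_, ?_⟩
  · rw [hInvAsc, h_inv.1 j h1 h2, smul_smul, ← zpow_natCast, h_pow, h_cast, neg_sub]
  · rw [hInvAsc, h_inv.2, smul_smul, inv_inv, geomSum_eq_Icc]
    simp only [h_pow, neg_sub]
  · rw [hAsc, h_asc.1 j h1 h2, smul_smul, ← zpow_natCast, h_cast]
  · rw [hAsc, h_asc.2, smul_smul, geomSum_eq_Icc]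

end PaperEval
end
end
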